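/- arXiv:1601.05682 — 4 statements merged into one kernel-verified Lean document; each statement's English description precedes it below -/
import Mathlib

section
/- For every a ∈ (−1,1), as m → ∞ one has J₄(a,m) = C₄₁(a)·m^{3−a} + O(m^{1−a}), where C₄₁(a) := 4π(1 − 2^{3−a}/4) / ((3−a)·Γ(3−a)·sin((3−a)π/2)). -/
/-!
The integrand concentrates near `x = 0`, where `sin⁻⁴(x/2)` equals `16 x⁻⁴ + O(x⁻²)`
(`abs_inv_sin_pow_four_sub_le`). Replacing it by `16 x⁻⁴` costs a multiple of
`∫₀^∞ x^(a-2) sin⁴(mx/2) dx`, which by the scaling `y = m x` is a constant times `m^(1-a)`; the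
constant is finite exactly because `a < 1` at infinity and `a > -3` at `0`. Extending the range from
`(0, π]` to the half-line costs `O(1)`, and `1 ≤ m^(1-a)`. What remains is, again by scaling,
`16 m^(3-a) ∫₀^∞ y^(a-4) sin⁴(y/2) dy`; see `J4_sub_le` and `scale_rpow_mul_sin_pow_four`.

The value of this constant is `integral_rpow_mul_sin_pow_four` with `s = 3 - a ∈ (2, 4)`: the Gamma
integral for `y^(-s-1)` turns it, by Fubini, into a combination of the integrals
`∫₀^∞ t^(s-3) / (c + t²) dt` with `c = 1, 4`, which are evaluated by the reflection formula for `Γ`.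
-/

open MeasureTheory Filter Asymptotics

/-- `J₄(a,m) := ∫₀^π x^a sin⁴(mx/2)/sin⁴(x/2) dx`. -/
noncomputable def J4 (a : ℝ) (m : ℕ) : ℝ :=
  ∫ x in (0 : ℝ)..Real.pi, x ^ a * Real.sin (m * x / 2) ^ 4 / Real.sin (x / 2) ^ 4

open Real Set in
/-- Fubini for a nonnegative kernel `f` on the quadrant `x, y > 0` whose two partial integrals are `F`
and `G`: integrability of `G` alone makes `f` jointly integrable, hence `F` is integrable with the
same total integral. -/
lemma integral_swap_Ioi {f : ℝ → ℝ → ℝ} {F G : ℝ → ℝ}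
    (hm : Measurable (Function.uncurry f))
    (hf0 : ∀ x > 0, ∀ y > 0, 0 ≤ f x y)
    (hF : ∀ x > 0, ∫ y in Ioi (0 : ℝ), f x y = F x)
    (hGi : ∀ y > 0, IntegrableOn (fun x => f x y) (Ioi 0))
    (hG : ∀ y > 0, ∫ x in Ioi (0 : ℝ), f x y = G y)
    (hint : IntegrableOn G (Ioi 0)) :
    IntegrableOn F (Ioi 0) ∧ ∫ x in Ioi (0 : ℝ), F x = ∫ y in Ioi (0 : ℝ), G y := by
  have hprod : Integrable (Function.uncurry f)
      ((volume.restrict (Ioi (0 : ℝ))).prod (volume.restrict (Ioi (0 : ℝ)))) := by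
    rw [integrable_prod_iff' hm.aestronglyMeasurable]
    constructor
    · filter_upwards [ae_restrict_mem measurableSet_Ioi] with y hy
      exact hGi y hy
    · refine hint.congr ?_
      filter_upwards [ae_restrict_mem measurableSet_Ioi] with y hy
      rw [← hG y hy]
      refine setIntegral_congr_fun measurableSet_Ioi fun x hx => ?_
      simp [abs_of_nonneg (hf0 x hx y hy)]
  have hFae : (fun x => ∫ y in Ioi (0 : ℝ), f x y) =ᵐ[volume.restrict (Ioi (0 : ℝ))] F := by
    filter_upwards [ae_restrict_mem measurableSet_Ioi] with x hx using hF x hx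
  refine ⟨hprod.integral_prod_left.congr hFae, ?_⟩
  rw [← integral_congr_ae hFae, integral_integral_swap hprod]
  exact setIntegral_congr_fun measurableSet_Ioi fun y hy => hG y hy

open Real Set in
/-- A form of Euler's reflection integral. Writing `1 / (c + t²) = ∫₀^∞ exp (-(c + t²) x) dx` and
integrating over `t` first gives `Γ(p/2) Γ(1 - p/2) c^(p/2 - 1) / 2`. -/
lemma integral_rpow_div_add_sq {p c : ℝ} (hp0 : 0 < p) (hp2 : p < 2) (hc : 0 < c) :
    IntegrableOn (fun t : ℝ => t ^ (p - 1) / (c + t ^ 2)) (Ioi 0) ∧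
      ∫ t in Ioi (0 : ℝ), t ^ (p - 1) / (c + t ^ 2) =
        π / (2 * sin (π * p / 2)) * c ^ (p / 2 - 1) := by
  have hr : 0 < 1 - p / 2 := by linarith
  have key := integral_swap_Ioi
    (f := fun t x => t ^ (p - 1) * exp (-(c + t ^ 2) * x))
    (F := fun t => t ^ (p - 1) / (c + t ^ 2))
    (G := fun x => 1 / 2 * Gamma (p / 2) * (x ^ ((1 - p / 2) - 1) * exp (-(c * x))))
    (by unfold Function.uncurry; fun_prop)
    (fun t ht x hx => by positivity)
    (fun t ht => by
      rw [integral_const_mul, integral_exp_mul_Ioi (by have := sq_nonneg t; linarith)]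
      rw [mul_zero, exp_zero, neg_div_neg_eq, mul_one_div])
    (fun x hx => by
      have := (integrableOn_rpow_mul_exp_neg_mul_sq hx (s := p - 1) (by linarith)).const_mul
        (exp (-(c * x)))
      refine IntegrableOn.congr_fun this (fun t ht => ?_) measurableSet_Ioi
      rw [show -(c + t ^ 2) * x = -(c * x) + -x * t ^ 2 by ring, exp_add]
      ring)
    (fun x hx => by
      have h := integral_rpow_mul_exp_neg_mul_rpow two_pos (q := p - 1) (by linarith) hx
      have : ∀ t : ℝ, t ^ (p - 1) * exp (-(c + t ^ 2) * x)
          = exp (-(c * x)) * (t ^ (p - 1) * exp (-x * t ^ (2 : ℝ))) := fun t => by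
        rw [show -(c + t ^ 2) * x = -(c * x) + -x * t ^ 2 by ring, exp_add, rpow_two]
        ring
      simp_rw [this]
      rw [integral_const_mul, h, show p - 1 + 1 = p by ring,
        show 1 - p / 2 - 1 = -p / 2 by ring]
      ring)
    (by
      have := integrableOn_rpow_mul_exp_neg_mul_rpow (s := 1 - p / 2 - 1) (by linarith)
        one_pos hc
      refine Integrable.const_mul ?_ _
      simpa [IntegrableOn] using this)
  refine ⟨key.1, key.2.trans ?_⟩
  rw [integral_const_mul, integral_rpow_mul_exp_neg_mul_Ioi hr hc]
  have hrefl := Gamma_mul_Gamma_one_sub (p / 2)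
  rw [one_div c, inv_rpow hc.le, ← rpow_neg hc.le, show -(1 - p / 2) = p / 2 - 1 by ring]
  calc _ = 1 / 2 * (Gamma (p / 2) * Gamma (1 - p / 2)) * c ^ (p / 2 - 1) := by ring
    _ = _ := by
      rw [hrefl, show π * (p / 2) = π * p / 2 by ring]
      ring

open Real Set in
/-- Laplace transform of the cosine, the real part of `∫₀^∞ exp ((-t + i b) y) dy`. -/
lemma laplace_cos {t : ℝ} (ht : 0 < t) (b : ℝ) :
    IntegrableOn (fun y : ℝ => exp (-t * y) * cos (b * y)) (Ioi 0) ∧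
      ∫ y in Ioi (0 : ℝ), exp (-t * y) * cos (b * y) = t / (t ^ 2 + b ^ 2) := by
  have hz : (-t + b * Complex.I : ℂ).re < 0 := by simpa using ht
  have hre : ∀ y : ℝ, (Complex.exp ((-t + b * Complex.I) * y)).re
      = exp (-t * y) * cos (b * y) := fun y => by
    rw [Complex.exp_re]
    simp
  have hi := integrableOn_exp_mul_complex_Ioi hz 0
  refine ⟨?_, ?_⟩
  · have := hi.re
    exact this.congr (Eventually.of_forall fun y => hre y)
  · simp_rw [← hre]
    have h := integral_re hi
    simp only [RCLike.re_to_complex] at h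
    rw [h, integral_exp_mul_complex_Ioi hz]
    simp only [Complex.ofReal_zero, mul_zero, Complex.exp_zero, Complex.div_re, Complex.normSq_apply]
    simp
    ring

lemma eight_sin_pow_four (y : ℝ) :
    8 * Real.sin (y / 2) ^ 4 = 3 - 4 * Real.cos y + Real.cos (2 * y) := by
  have h3 : Real.sin (y / 2) ^ 2 = (1 - Real.cos y) / 2 := by
    rw [Real.sin_sq_eq_half_sub, mul_div_cancel₀ y two_ne_zero]
    ring
  rw [Real.cos_two_mul, show Real.sin (y / 2) ^ 4 = (Real.sin (y / 2) ^ 2) ^ 2 by ring, h3]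
  ring

open Real Set in
/-- Laplace transform of `8 sin⁴(y/2) = 3 - 4 cos y + cos 2y`. -/
lemma laplace_sin_pow_four {t : ℝ} (ht : 0 < t) :
    IntegrableOn (fun y : ℝ => exp (-t * y) * (8 * sin (y / 2) ^ 4)) (Ioi 0) ∧
      ∫ y in Ioi (0 : ℝ), exp (-t * y) * (8 * sin (y / 2) ^ 4) =
        12 / (t * ((1 + t ^ 2) * (4 + t ^ 2))) := by
  obtain ⟨i0, e0⟩ := laplace_cos ht 0
  obtain ⟨i1, e1⟩ := laplace_cos ht 1
  obtain ⟨i2, e2⟩ := laplace_cos ht 2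
  have hpt : ∀ y : ℝ, exp (-t * y) * (8 * sin (y / 2) ^ 4) =
      3 * (exp (-t * y) * cos (0 * y)) - 4 * (exp (-t * y) * cos (1 * y))
        + exp (-t * y) * cos (2 * y) := fun y => by
    rw [eight_sin_pow_four]
    simp only [zero_mul, cos_zero, one_mul]
    ring
  simp_rw [hpt]
  have i01 : IntegrableOn (fun y : ℝ =>
      3 * (exp (-t * y) * cos (0 * y)) - 4 * (exp (-t * y) * cos (1 * y))) (Ioi 0) :=
    (i0.const_mul 3).sub (i1.const_mul 4)
  refine ⟨i01.add i2, ?_⟩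
  rw [integral_add i01 i2,
    integral_sub (i0.const_mul 3) (i1.const_mul 4), integral_const_mul, integral_const_mul,
    e0, e1, e2]
  have h1 : t ^ 2 + 1 ^ 2 ≠ 0 := by positivity
  have h2 : t ^ 2 + 2 ^ 2 ≠ 0 := by positivity
  have h3 : 1 + t ^ 2 ≠ 0 := by positivity
  have h4 : 4 + t ^ 2 ≠ 0 := by positivity
  field_simp
  ring

open Real Set in
/-- Evaluation of the constant. Since `y^(-s-1) = Γ(s+1)⁻¹ ∫₀^∞ t^s exp (-t y) dt`, Fubini reduces the
integral to that of `t^s` against the Laplace transform of `sin⁴(y/2)`, a rational function whose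
partial fractions are covered by `integral_rpow_div_add_sq` with `p = s - 2` and `c = 1, 4`. -/
lemma integral_rpow_mul_sin_pow_four {s : ℝ} (h2 : 2 < s) (h4 : s < 4) :
    IntegrableOn (fun y : ℝ => y ^ (-s - 1) * sin (y / 2) ^ 4) (Ioi 0) ∧
      16 * ∫ y in Ioi (0 : ℝ), y ^ (-s - 1) * sin (y / 2) ^ 4 =
        4 * π * (1 - 2 ^ s / 4) / (s * Gamma s * sin (s * π / 2)) := by
  have hs : 0 < s + 1 := by linarith
  have hΓ : 0 < Gamma (s + 1) := Gamma_pos_of_pos hs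
  obtain ⟨j1, v1⟩ := integral_rpow_div_add_sq (p := s - 2) (c := 1) (by linarith) (by linarith)
    one_pos
  obtain ⟨j4, v4⟩ := integral_rpow_div_add_sq (p := s - 2) (c := 4) (by linarith) (by linarith)
    four_pos
  have hG : ∀ t > (0 : ℝ), t ^ s * (12 / (t * ((1 + t ^ 2) * (4 + t ^ 2)))) =
      16 * (t ^ (s - 2 - 1) / (4 + t ^ 2)) - 4 * (t ^ (s - 2 - 1) / (1 + t ^ 2)) := by
    intro t ht
    -- Splitting off `t³` leaves the exponent `s - 3 ∈ (-1, 1)`, for which both partial fractions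
    -- below are integrable; those of `t^(s-1) / ((1+t²)(4+t²))` itself are not.
    have : t ^ s = t ^ (s - 2 - 1) * t ^ 3 := by
      rw [← rpow_natCast, ← rpow_add ht]
      congr 1
      push_cast
      ring
    rw [this]
    have h3 : 1 + t ^ 2 ≠ 0 := by positivity
    have h4 : 4 + t ^ 2 ≠ 0 := by positivity
    field_simp
    ring
  have hGint : IntegrableOn (fun t : ℝ =>
      16 * (t ^ (s - 2 - 1) / (4 + t ^ 2)) - 4 * (t ^ (s - 2 - 1) / (1 + t ^ 2))) (Ioi 0) :=
    (j4.const_mul 16).sub (j1.const_mul 4)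
  obtain ⟨hi, hv⟩ := integral_swap_Ioi
    (f := fun y t => t ^ s * (exp (-t * y) * (8 * sin (y / 2) ^ 4)))
    (F := fun y => 8 * Gamma (s + 1) * (y ^ (-s - 1) * sin (y / 2) ^ 4))
    (G := fun t => 16 * (t ^ (s - 2 - 1) / (4 + t ^ 2)) - 4 * (t ^ (s - 2 - 1) / (1 + t ^ 2)))
    (by unfold Function.uncurry; fun_prop)
    (fun y hy t ht => by positivity)
    (fun y hy => by
      have h := integral_rpow_mul_exp_neg_mul_Ioi hs hy
      rw [add_sub_cancel_right, one_div, inv_rpow (le_of_lt hy), ← rpow_neg (le_of_lt hy),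
        neg_add'] at h
      have e : ∀ t : ℝ, t ^ s * (exp (-t * y) * (8 * sin (y / 2) ^ 4)) =
          8 * sin (y / 2) ^ 4 * (t ^ s * exp (-(y * t))) := fun t => by
        rw [show -t * y = -(y * t) by ring]
        ring
      simp_rw [e]
      rw [integral_const_mul, h]
      ring)
    (fun t ht => (laplace_sin_pow_four ht).1.const_mul _)
    (fun t ht => by
      rw [integral_const_mul, (laplace_sin_pow_four ht).2, hG t ht])
    hGint
  constructor
  · refine (hi.const_mul (8 * Gamma (s + 1))⁻¹).congr (Eventually.of_forall fun y => ?_)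
    dsimp only
    field_simp
  · rw [integral_const_mul, integral_sub (j4.const_mul 16) (j1.const_mul 4), integral_const_mul,
      integral_const_mul, v1, v4] at hv
    have hsin : sin (π * (s - 2) / 2) = -sin (s * π / 2) := by
      rw [← sin_sub_pi]
      congr 1
      ring
    have hpow : (4 : ℝ) ^ ((s - 2) / 2 - 1) = 2 ^ s / 16 := by
      rw [show (4 : ℝ) = 2 ^ (2 : ℝ) by norm_num, ← rpow_mul (by norm_num),
        show 2 * ((s - 2) / 2 - 1) = s - (4 : ℕ) by push_cast; ring, rpow_sub_natCast (by norm_num)]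
      norm_num
    -- As `2 < s < 4`, the angle `s π / 2` lies in `(π, 2π)`, so the sine is negative.
    have hne : sin (s * π / 2) ≠ 0 := by
      have : 0 < sin (π * (s - 2) / 2) :=
        sin_pos_of_pos_of_lt_pi (by have := pi_pos; have : 0 < s - 2 := by linarith
                                    positivity) (by nlinarith [pi_pos])
      rw [hsin] at this
      linarith
    have hs0 : s ≠ 0 := by linarith
    have hΓs : Gamma s ≠ 0 := (Gamma_pos_of_pos (by linarith)).ne'
    rw [hsin, hpow, one_rpow, Gamma_add_one hs0] at hv
    generalize (∫ y in Ioi (0 : ℝ), y ^ (-s - 1) * sin (y / 2) ^ 4) = I at hv ⊢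
    rw [eq_div_iff (by positivity)]
    field_simp at hv
    field_simp
    linarith

open Real Set in
lemma integrableOn_rpow_sub_two_mul_sin_pow_four {a : ℝ} (ha1 : -1 < a) (ha2 : a < 1) :
    IntegrableOn (fun y : ℝ => y ^ (a - 2) * sin (y / 2) ^ 4) (Ioi 0) := by
  have hmeas : Measurable fun y : ℝ => y ^ (a - 2) * sin (y / 2) ^ 4 := by fun_prop
  rw [← Ioc_union_Ioi_eq_Ioi zero_le_one]
  refine IntegrableOn.union ?_ ?_
  -- `sin⁴(y/2) ≤ y²` controls the singularity at `0`, and `sin⁴(y/2) ≤ 1` the tail.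
  · have : IntegrableOn (fun y : ℝ => y ^ a) (Ioc 0 1) :=
      (intervalIntegrable_iff_integrableOn_Ioc_of_le zero_le_one).1
        (intervalIntegral.intervalIntegrable_rpow' ha1)
    refine Integrable.mono' this hmeas.aestronglyMeasurable ?_
    filter_upwards [ae_restrict_mem measurableSet_Ioc] with y hy
    have hy0 : 0 < y := hy.1
    have hs : sin (y / 2) ^ 4 ≤ y ^ 2 := by
      have h1 : |sin (y / 2)| ≤ y := by
        have := abs_sin_le_abs (x := y / 2)
        rw [abs_of_pos (by positivity : 0 < y / 2)] at this
        linarith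
      have h2 : sin (y / 2) ^ 2 ≤ y ^ 2 := sq_le_sq' (by linarith [neg_abs_le (sin (y / 2))])
        ((le_abs_self _).trans h1)
      nlinarith [sin_sq_le_one (y / 2), sq_nonneg (sin (y / 2))]
    rw [norm_of_nonneg (by positivity)]
    calc y ^ (a - 2) * sin (y / 2) ^ 4 ≤ y ^ (a - 2) * y ^ 2 := by gcongr
      _ = y ^ a := by
        rw [← rpow_two, ← rpow_add hy0]
        congr 1
        ring
  · refine Integrable.mono' (integrableOn_Ioi_rpow_of_lt (a := a - 2) (by linarith) one_pos)
      hmeas.aestronglyMeasurable ?_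
    filter_upwards [ae_restrict_mem measurableSet_Ioi] with y hy
    have hy0 : 0 < y := one_pos.trans hy
    rw [norm_of_nonneg (by positivity)]
    refine mul_le_of_le_one_right (by positivity) ?_
    rw [show sin (y / 2) ^ 4 = (sin (y / 2) ^ 2) ^ 2 by ring]
    exact pow_le_one₀ (sq_nonneg _) (sin_sq_le_one _)

open Real Set in
/-- The substitution `y = m x`. -/
lemma scale_rpow_mul_sin_pow_four {q m : ℝ} (hm : 0 < m)
    (hi : IntegrableOn (fun y : ℝ => y ^ q * sin (y / 2) ^ 4) (Ioi 0)) :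
    IntegrableOn (fun x : ℝ => x ^ q * sin (m * x / 2) ^ 4) (Ioi 0) ∧
      ∫ x in Ioi (0 : ℝ), x ^ q * sin (m * x / 2) ^ 4 =
        m ^ (-q - 1) * ∫ y in Ioi (0 : ℝ), y ^ q * sin (y / 2) ^ 4 := by
  have hpt : ∀ x ∈ Ioi (0 : ℝ), m ^ (-q) * ((m * x) ^ q * sin (m * x / 2) ^ 4) =
      x ^ q * sin (m * x / 2) ^ 4 := fun x hx => by
    rw [mul_rpow hm.le (le_of_lt hx), rpow_neg hm.le]
    have := (rpow_pos_of_pos hm q).ne'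
    field_simp
  have hi' := (integrableOn_Ioi_comp_mul_left_iff
    (fun y : ℝ => y ^ q * sin (y / 2) ^ 4) 0 hm).2 (by simpa using hi)
  refine ⟨IntegrableOn.congr_fun (hi'.const_mul (m ^ (-q))) hpt measurableSet_Ioi, ?_⟩
  rw [← setIntegral_congr_fun measurableSet_Ioi hpt, integral_const_mul,
    integral_comp_mul_left_Ioi (fun y : ℝ => y ^ q * sin (y / 2) ^ 4) 0 hm, mul_zero,
    smul_eq_mul, rpow_sub_one hm.ne']
  ring

open Real Set in
/-- On `(0, π]`, `sin⁻⁴(x/2)` differs from its leading singularity `16 / x⁴` by `O(x⁻²)`. -/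
lemma abs_inv_sin_pow_four_sub_le {x : ℝ} (hx : x ∈ Ioc 0 π) :
    |1 / sin (x / 2) ^ 4 - 16 / x ^ 4| ≤ 256 / x ^ 2 := by
  obtain ⟨u, rfl⟩ : ∃ u, x = 2 * u := ⟨x / 2, by ring⟩
  have hu : 0 < u := by have := hx.1; linarith
  have hu2 : u ≤ π / 2 := by have := hx.2; linarith
  rw [show 2 * u / 2 = u by ring]
  have hlow : u / 2 ≤ sin u := by
    have h := mul_le_sin hu.le hu2
    have : 1 / 2 ≤ 2 / π := by
      rw [div_le_div_iff₀ two_pos pi_pos]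
      linarith [pi_le_four]
    nlinarith
  have hup : sin u ≤ u := sin_le hu.le
  have hcub : u - sin u ≤ u ^ 3 := by
    have := sin_ge_sub_cube hu.le
    have : 0 < u ^ 3 := by positivity
    linarith
  have hS : 0 < sin u := by linarith
  generalize sin u = S at *
  have hS4 : u ^ 4 / 16 ≤ S ^ 4 := by
    calc u ^ 4 / 16 = (u / 2) ^ 4 := by ring
      _ ≤ S ^ 4 := by gcongr
  have hnum : u ^ 4 - S ^ 4 ≤ 4 * u ^ 6 := by
    calc u ^ 4 - S ^ 4 = (u - S) * ((u + S) * (u ^ 2 + S ^ 2)) := by ring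
      _ ≤ u ^ 3 * ((u + u) * (u ^ 2 + u ^ 2)) := by gcongr
      _ = 4 * u ^ 6 := by ring
  have heq : 1 / S ^ 4 - 16 / (2 * u) ^ 4 = (u ^ 4 - S ^ 4) / (S ^ 4 * u ^ 4) := by
    field_simp
    ring
  rw [heq, abs_of_nonneg (div_nonneg (sub_nonneg.2 (by gcongr)) (by positivity))]
  calc (u ^ 4 - S ^ 4) / (S ^ 4 * u ^ 4) ≤ 4 * u ^ 6 / (u ^ 4 / 16 * u ^ 4) := by gcongr
    _ = 256 / (2 * u) ^ 2 := by
      field_simp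
      ring

open Real Set in
/-- Comparison of `J4 a m` with the integral over the whole half-line of the integrand in which
`sin⁻⁴(x/2)` is replaced by `16 / x⁴`. The first error term is the cost of the replacement on
`(0, π]`, the second the cost of extending the range past `π`. -/
lemma J4_sub_le {a : ℝ} (ha1 : -1 < a) (ha2 : a < 1) {m : ℕ} (hm : 1 ≤ m) :
    |J4 a m - 16 * ∫ x in Ioi (0 : ℝ), x ^ (a - 4) * sin (m * x / 2) ^ 4| ≤
      256 * (∫ x in Ioi (0 : ℝ), x ^ (a - 2) * sin (m * x / 2) ^ 4) +
        16 * ∫ x in Ioi π, x ^ (a - 4) := by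
  have hm0 : (0 : ℝ) < m := by exact_mod_cast hm
  have hi4 : IntegrableOn (fun x : ℝ => x ^ (a - 4) * sin (m * x / 2) ^ 4) (Ioi 0) := by
    have := (integral_rpow_mul_sin_pow_four (s := 3 - a) (by linarith) (by linarith)).1
    rw [show -(3 - a) - 1 = a - 4 by ring] at this
    exact (scale_rpow_mul_sin_pow_four hm0 this).1
  have hi2 : IntegrableOn (fun x : ℝ => x ^ (a - 2) * sin (m * x / 2) ^ 4) (Ioi 0) :=
    (scale_rpow_mul_sin_pow_four hm0 (integrableOn_rpow_sub_two_mul_sin_pow_four ha1 ha2)).1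
  have hsub : Ioc 0 π ⊆ Ioi (0 : ℝ) := Ioc_subset_Ioi_self
  have hsubπ : Ioi π ⊆ Ioi (0 : ℝ) := Ioi_subset_Ioi pi_pos.le
  set D : ℝ → ℝ := fun x => x ^ a * sin (m * x / 2) ^ 4 / sin (x / 2) ^ 4 -
    16 * (x ^ (a - 4) * sin (m * x / 2) ^ 4) with hD
  have hDle : ∀ x ∈ Ioc 0 π, ‖D x‖ ≤ 256 * (x ^ (a - 2) * sin (m * x / 2) ^ 4) := by
    intro x hx
    have hx0 : 0 < x := hx.1
    have e4 : x ^ (a - 4) = x ^ a / x ^ 4 := by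
      exact_mod_cast rpow_sub_natCast hx0.ne' a 4
    have e2 : x ^ (a - 2) = x ^ a / x ^ 2 := by
      exact_mod_cast rpow_sub_natCast hx0.ne' a 2
    have : D x = x ^ a * sin (m * x / 2) ^ 4 * (1 / sin (x / 2) ^ 4 - 16 / x ^ 4) := by
      simp only [hD, e4]
      ring
    rw [this, e2, norm_mul, norm_of_nonneg (by positivity), norm_eq_abs]
    calc _ ≤ x ^ a * sin (m * x / 2) ^ 4 * (256 / x ^ 2) := by
          gcongr
          exact abs_inv_sin_pow_four_sub_le hx
      _ = _ := by ring
  have hDint : IntegrableOn D (Ioc 0 π) := by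
    refine Integrable.mono' ((hi2.mono_set hsub).const_mul 256)
      (Measurable.aestronglyMeasurable (by fun_prop)) ?_
    filter_upwards [ae_restrict_mem measurableSet_Ioc] with x hx using hDle x hx
  have hJ : J4 a m = (∫ x in Ioc 0 π, D x) +
      16 * ∫ x in Ioc 0 π, x ^ (a - 4) * sin (m * x / 2) ^ 4 := by
    rw [J4, intervalIntegral.integral_of_le pi_pos.le, ← integral_const_mul,
      ← integral_add hDint ((hi4.mono_set hsub).const_mul 16)]
    simp [hD]
  have hsplit : ∫ x in Ioi (0 : ℝ), x ^ (a - 4) * sin (m * x / 2) ^ 4 =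
      (∫ x in Ioc 0 π, x ^ (a - 4) * sin (m * x / 2) ^ 4) +
        ∫ x in Ioi π, x ^ (a - 4) * sin (m * x / 2) ^ 4 := by
    rw [← Ioc_union_Ioi_eq_Ioi pi_pos.le, setIntegral_union
      (Ioc_disjoint_Ioi le_rfl) measurableSet_Ioi (hi4.mono_set hsub) (hi4.mono_set hsubπ)]
  have hmain : |∫ x in Ioc 0 π, D x| ≤
      256 * ∫ x in Ioi (0 : ℝ), x ^ (a - 2) * sin (m * x / 2) ^ 4 := by
    rw [← integral_const_mul, ← norm_eq_abs]
    refine (norm_integral_le_of_norm_le ((hi2.mono_set hsub).const_mul 256) ?_).trans ?_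
    · filter_upwards [ae_restrict_mem measurableSet_Ioc] with x hx using hDle x hx
    · refine setIntegral_mono_set (hi2.const_mul 256) ?_ hsub.eventuallyLE
      filter_upwards [ae_restrict_mem measurableSet_Ioi] with x hx
      have : 0 < x := hx
      simp only [Pi.zero_apply]
      positivity
  have htail : |∫ x in Ioi π, x ^ (a - 4) * sin (m * x / 2) ^ 4| ≤ ∫ x in Ioi π, x ^ (a - 4) := by
    rw [← norm_eq_abs]
    refine norm_integral_le_of_norm_le
      (integrableOn_Ioi_rpow_of_lt (a := a - 4) (by linarith) pi_pos) ?_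
    filter_upwards [ae_restrict_mem measurableSet_Ioi] with x hx
    have hx0 : 0 < x := pi_pos.trans hx
    rw [norm_of_nonneg (by positivity)]
    refine mul_le_of_le_one_right (by positivity) ?_
    rw [show sin (m * x / 2) ^ 4 = (sin (m * x / 2) ^ 2) ^ 2 by ring]
    exact pow_le_one₀ (sq_nonneg _) (sin_sq_le_one _)
  rw [hJ, hsplit, abs_le]
  rw [abs_le] at hmain htail
  constructor <;> linarith [hmain.1, hmain.2, htail.1, htail.2]

/-- For `a ∈ (-1,1)`, `J₄(a,m) = C₄₁(a) m^{3-a} + O(m^{1-a})` as the integer `m → ∞`,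
where `C₄₁(a) = 4π(1 - 2^{3-a}/4)/((3-a) Γ(3-a) sin((3-a)π/2))`. -/
theorem stmt_3 (a : ℝ) (ha : a ∈ Set.Ioo (-1 : ℝ) 1) :
    (fun m : ℕ => J4 a m -
        4 * Real.pi * (1 - 2 ^ (3 - a) / 4) /
          ((3 - a) * Real.Gamma (3 - a) * Real.sin ((3 - a) * Real.pi / 2)) * (m : ℝ) ^ (3 - a))
      =O[atTop] fun m : ℕ => (m : ℝ) ^ (1 - a) := by
  obtain ⟨ha1, ha2⟩ := ha
  obtain ⟨hi, hC⟩ := integral_rpow_mul_sin_pow_four (s := 3 - a) (by linarith) (by linarith)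
  rw [show -(3 - a) - 1 = a - 4 by ring] at hi hC
  refine IsBigO.of_bound
    (256 * (∫ y in Set.Ioi (0 : ℝ), y ^ (a - 2) * Real.sin (y / 2) ^ 4) +
      16 * ∫ x in Set.Ioi Real.pi, x ^ (a - 4)) ?_
  filter_upwards [eventually_ge_atTop 1] with m hm
  have hm0 : (0 : ℝ) < m := by exact_mod_cast hm
  have hb := J4_sub_le ha1 ha2 hm
  rw [(scale_rpow_mul_sin_pow_four hm0 hi).2,
    (scale_rpow_mul_sin_pow_four hm0 (integrableOn_rpow_sub_two_mul_sin_pow_four ha1 ha2)).2,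
    show -(a - 4) - 1 = 3 - a by ring, show -(a - 2) - 1 = 1 - a by ring] at hb
  -- The tail past `π` is `O(1)`, which `m^(1-a) ≥ 1` absorbs.
  have hpow : 1 ≤ (m : ℝ) ^ (1 - a) :=
    Real.one_le_rpow (by exact_mod_cast hm) (by linarith)
  have hT : 0 ≤ ∫ x in Set.Ioi Real.pi, x ^ (a - 4) :=
    setIntegral_nonneg measurableSet_Ioi fun x hx => by
      have : 0 < x := Real.pi_pos.trans hx
      positivity
  rw [← hC, Real.norm_eq_abs, Real.norm_of_nonneg (by positivity), mul_assoc,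
    mul_comm _ ((m : ℝ) ^ (3 - a))]
  refine hb.trans ?_
  nlinarith [mul_nonneg hT (sub_nonneg.2 hpow)]
end

section
/- For every a ∈ (−1,1), as m → ∞ one has J₆(a,m) = C₆₁(a)·m^{3−a} + O(m^{1−a}), where C₆₁(a) := π(15 − 6·2^{3−a} + 3^{3−a}) / (4(3−a)·Γ(3−a)·sin((3−a)π/2)). -/
/-!
On `(0, π]` one has `1 / sin⁴(x/2) = 16 / x⁴ + O(1 / x²)` (`inv_sin_pow_four_bound`), so up to
`O(∫₀^∞ x^{a-2} sin⁶(mx/2) dx)`, which is `O(m^{1-a})` by rescaling `x = u/m`, the integral `J₆(a,m)`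
equals `16 ∫₀^π x^{a-4} sin⁶(mx/2) dx`. Extending this integral to `(0,∞)` costs only `O(1)`, and
`1 ≤ m^{1-a}`. Rescaling again, the main term is `16 m^{3-a} ∫₀^∞ u^{a-4} sin⁶(u/2) du`.

The constant is evaluated in `integral_rpow_mul_sin_half_pow_six`, with `s = 3 - a ∈ (2,4)`. There
the termwise integrals of the cosine expansion of `sin⁶` diverge at `0`. Writing `u^{-s-1}` as a
Laplace integral and applying Tonelli instead leads to a combination of the convergent
integrals `∫₀^∞ t^{s-3} / (t² + k²) dt`, which Euler's reflection formula evaluates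
(`integral_rpow_div_sq_add_sq`).
-/

open MeasureTheory Filter Asymptotics

/-- `J₆(a,m) := ∫₀^π x^a sin⁶(mx/2)/sin⁴(x/2) dx`. -/
noncomputable def J6 (a : ℝ) (m : ℕ) : ℝ :=
  ∫ x in (0 : ℝ)..Real.pi, x ^ a * Real.sin (m * x / 2) ^ 6 / Real.sin (x / 2) ^ 4

/-- Tonelli on the quadrant `(0,∞)²`: integrability of one iterated integral `g` yields both the
integrability of the other one, `h`, and the equality of their integrals. -/
theorem tonelli_Ioi {f : ℝ → ℝ → ℝ} {g h : ℝ → ℝ} (hf : Measurable (Function.uncurry f))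
    (h0 : ∀ x > 0, ∀ y > 0, 0 ≤ f x y)
    (h1 : ∀ x > 0, IntegrableOn (f x) (Set.Ioi 0))
    (hg1 : ∀ x > 0, ∫ y in Set.Ioi 0, f x y = g x)
    (hh : ∀ y > 0, ∫ x in Set.Ioi 0, f x y = h y)
    (hg : IntegrableOn g (Set.Ioi 0)) :
    IntegrableOn h (Set.Ioi 0) ∧ ∫ y in Set.Ioi 0, h y = ∫ x in Set.Ioi 0, g x := by
  have hint : Integrable (Function.uncurry f)
      ((volume.restrict (Set.Ioi 0)).prod (volume.restrict (Set.Ioi 0))) := by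
    rw [integrable_prod_iff hf.aestronglyMeasurable]
    constructor
    · filter_upwards [ae_restrict_mem measurableSet_Ioi] with x hx using h1 x hx
    · refine hg.congr_fun (fun x hx => ?_) measurableSet_Ioi
      rw [← hg1 x hx]
      refine setIntegral_congr_fun measurableSet_Ioi fun y hy => ?_
      exact (Real.norm_of_nonneg (h0 x hx y hy)).symm
  constructor
  · refine IntegrableOn.congr_fun hint.integral_prod_right (fun y hy => ?_) measurableSet_Ioi
    exact hh y hy
  · rw [← setIntegral_congr_fun measurableSet_Ioi hh, ← setIntegral_congr_fun measurableSet_Ioi hg1]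
    exact (integral_integral_swap hint).symm

theorem integrableOn_rpow_mul_exp {s b : ℝ} (hs : -1 < s) (hb : 0 < b) :
    IntegrableOn (fun x : ℝ => x ^ s * Real.exp (-(b * x))) (Set.Ioi 0) := by
  simpa using integrableOn_rpow_mul_exp_neg_mul_rpow (p := 1) hs one_pos hb

/-- The Mellin transform of `1 / (t² + k²)`. Writing `1 / (t² + k²) = ∫₀^∞ e^{-u(t² + k²)} du`
and integrating in `t` first gives `Γ(p/2) Γ(1 - p/2)`, which the reflection formula evaluates. -/
theorem integral_rpow_div_sq_add_sq {p k : ℝ} (hp0 : 0 < p) (hp2 : p < 2) (hk : 0 < k) :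
    IntegrableOn (fun t : ℝ => t ^ (p - 1) / (t ^ 2 + k ^ 2)) (Set.Ioi 0) ∧
      ∫ t in Set.Ioi 0, t ^ (p - 1) / (t ^ 2 + k ^ 2) =
        k ^ (p - 2) * (Real.pi / (2 * Real.sin (Real.pi * (p / 2)))) := by
  have key := tonelli_Ioi
    (f := fun u t : ℝ => t ^ (p - 1) * Real.exp (-(u * (t ^ 2 + k ^ 2))))
    (g := fun u => Real.Gamma (p / 2) / 2 * (u ^ (1 - p / 2 - 1) * Real.exp (-(k ^ 2 * u))))
    (h := fun t => t ^ (p - 1) / (t ^ 2 + k ^ 2))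
    (by simp only [Function.uncurry_def]; fun_prop)
    (fun u hu t ht => by have : 0 < t := ht; positivity) ?_ ?_ ?_
    ((integrableOn_rpow_mul_exp (by linarith) (by positivity)).const_mul _)
  · refine ⟨key.1, key.2.trans ?_⟩
    rw [integral_const_mul, Real.integral_rpow_mul_exp_neg_mul_Ioi (by linarith) (by positivity)]
    have e : (1 / k ^ 2) ^ (1 - p / 2) = k ^ (p - 2) := by
      rw [one_div, ← Real.rpow_natCast, ← Real.rpow_neg hk.le, ← Real.rpow_mul hk.le]
      congr 1; push_cast; ring
    rw [e, show Real.pi / (2 * Real.sin (Real.pi * (p / 2))) =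
      (Real.pi / Real.sin (Real.pi * (p / 2))) / 2 by rw [div_div, mul_comm],
      ← Real.Gamma_mul_Gamma_one_sub]
    ring
  · intro u hu
    have := (integrableOn_rpow_mul_exp_neg_mul_sq (b := u) hu (s := p - 1) (by linarith)).mul_const
      (Real.exp (-(k ^ 2 * u)))
    refine IntegrableOn.congr_fun this (fun t _ => ?_) measurableSet_Ioi
    simp only [mul_assoc, ← Real.exp_add]
    ring_nf
  · intro u hu
    have := integral_rpow_mul_exp_neg_mul_rpow (p := 2) (q := p - 1) (b := u) (by norm_num)
      (by linarith) hu
    have e : ∀ t ∈ Set.Ioi (0 : ℝ), t ^ (p - 1) * Real.exp (-(u * (t ^ 2 + k ^ 2))) =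
        (t ^ (p - 1) * Real.exp (-u * t ^ (2 : ℝ))) * Real.exp (-(k ^ 2 * u)) := by
      intro t _
      rw [Real.rpow_two, mul_assoc, ← Real.exp_add]
      ring_nf
    rw [setIntegral_congr_fun measurableSet_Ioi e, integral_mul_const, this]
    rw [show -(p - 1 + 1) / 2 = 1 - p / 2 - 1 by ring, show (p - 1 + 1) / 2 = p / 2 by ring]
    ring
  · intro t ht
    have ht : 0 < t := ht
    have := Real.integral_rpow_mul_exp_neg_mul_Ioi (a := 1) (r := t ^ 2 + k ^ 2) one_pos
      (by positivity)
    simp only [sub_self, Real.rpow_zero, one_mul, Real.rpow_one, Real.Gamma_one] at this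
    simp only [mul_comm _ (t ^ 2 + k ^ 2)]
    rw [integral_const_mul, this]
    ring

theorem integral_exp_mul_cos {t : ℝ} (ht : 0 < t) (k : ℝ) :
    IntegrableOn (fun u : ℝ => Real.exp (-(t * u)) * Real.cos (k * u)) (Set.Ioi 0) ∧
      ∫ u in Set.Ioi 0, Real.exp (-(t * u)) * Real.cos (k * u) = t / (t ^ 2 + k ^ 2) := by
  have hexp : IntegrableOn (fun u : ℝ => Real.exp (-(t * u))) (Set.Ioi 0) := by
    simpa using integrableOn_rpow_mul_exp (s := 0) (by norm_num) ht
  have hi : IntegrableOn (fun u : ℝ => Real.exp (-(t * u)) * Real.cos (k * u)) (Set.Ioi 0) := by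
    refine Integrable.mono' hexp (by fun_prop) (.of_forall fun u => ?_)
    rw [norm_mul, Real.norm_of_nonneg (Real.exp_nonneg _)]
    exact mul_le_of_le_one_right (Real.exp_nonneg _) (Real.abs_cos_le_one _)
  refine ⟨hi, ?_⟩
  have hpos : 0 < t ^ 2 + k ^ 2 := by positivity
  have hd : ∀ u ∈ Set.Ici (0 : ℝ), HasDerivAt
      (fun u : ℝ => Real.exp (-(t * u)) *
        ((k * Real.sin (k * u) - t * Real.cos (k * u)) / (t ^ 2 + k ^ 2)))
      (Real.exp (-(t * u)) * Real.cos (k * u)) u := by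
    intro u _
    have h1 : HasDerivAt (fun u : ℝ => t * u) t u := by simpa using (hasDerivAt_id u).const_mul t
    have h2 : HasDerivAt (fun u : ℝ => k * u) k u := by simpa using (hasDerivAt_id u).const_mul k
    have := h1.fun_neg.exp.mul (((h2.sin.const_mul k).sub (h2.cos.const_mul t)).div_const (t ^ 2 + k ^ 2))
    refine this.congr_deriv ?_
    simp only [Pi.sub_apply]
    field_simp
    ring
  have hlim : Tendsto (fun u : ℝ => Real.exp (-(t * u)) *
        ((k * Real.sin (k * u) - t * Real.cos (k * u)) / (t ^ 2 + k ^ 2))) atTop (nhds 0) := by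
    have he : Tendsto (fun u : ℝ => Real.exp (-(t * u))) atTop (nhds 0) :=
      Real.tendsto_exp_neg_atTop_nhds_zero.comp (tendsto_id.const_mul_atTop ht)
    refine he.zero_mul_isBoundedUnder_le ?_
    refine isBoundedUnder_of ⟨(|k| + |t|) / (t ^ 2 + k ^ 2), fun u => ?_⟩
    simp only [Function.comp, norm_div, Real.norm_eq_abs, abs_of_pos hpos]
    gcongr
    refine (abs_sub _ _).trans ?_
    rw [abs_mul, abs_mul]
    gcongr
    · exact mul_le_of_le_one_right (abs_nonneg _) (Real.abs_sin_le_one _)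
    · exact mul_le_of_le_one_right (abs_nonneg _) (Real.abs_cos_le_one _)
  rw [integral_Ioi_of_hasDerivAt_of_tendsto' hd hi hlim]
  simp
  ring

theorem sin_half_pow_six (u : ℝ) : Real.sin (u / 2) ^ 6 =
    (10 - 15 * Real.cos u + 6 * Real.cos (2 * u) - Real.cos (3 * u)) / 32 := by
  rw [Real.cos_three_mul, Real.cos_two_mul]
  have : Real.sin (u / 2) ^ 2 = (1 - Real.cos u) / 2 := by
    rw [Real.sin_sq_eq_half_sub, mul_div_cancel₀ _ two_ne_zero]; ring
  rw [show Real.sin (u / 2) ^ 6 = (Real.sin (u / 2) ^ 2) ^ 3 by ring, this]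
  ring

theorem integral_comb {f₁ f₂ f₃ : ℝ → ℝ} {μ : Measure ℝ} (h₁ : Integrable f₁ μ)
    (h₂ : Integrable f₂ μ) (h₃ : Integrable f₃ μ) (c₁ c₂ c₃ : ℝ) :
    Integrable (fun x => c₁ * f₁ x + c₂ * f₂ x - c₃ * f₃ x) μ ∧
      ∫ x, (c₁ * f₁ x + c₂ * f₂ x - c₃ * f₃ x) ∂μ =
        c₁ * (∫ x, f₁ x ∂μ) + c₂ * (∫ x, f₂ x ∂μ) - c₃ * (∫ x, f₃ x ∂μ) := by
  have h : Integrable (fun x => c₁ * f₁ x + c₂ * f₂ x) μ := (h₁.const_mul c₁).add (h₂.const_mul c₂)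
  refine ⟨h.sub (h₃.const_mul c₃), ?_⟩
  rw [integral_sub h (h₃.const_mul c₃), integral_add (h₁.const_mul c₁) (h₂.const_mul c₂)]
  simp only [integral_const_mul]

/-- Laplace transform of `sin⁶(u/2)`. The cosine expansion of `sin⁶` gives
`10/t - 15t/(t²+1) + 6t/(t²+4) - t/(t²+9)` up to the factor `1/32`; since `sin⁶` vanishes to order
six at `0`, the leading terms at `t = ∞` cancel, leaving the factor `t⁻³` displayed here. -/
theorem integral_exp_mul_sin_half_pow_six {t : ℝ} (ht : 0 < t) :
    ∫ u in Set.Ioi 0, Real.exp (-(t * u)) * Real.sin (u / 2) ^ 6 =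
      (-15 / (t ^ 2 + 1 ^ 2) + 96 / (t ^ 2 + 2 ^ 2) - 81 / (t ^ 2 + 3 ^ 2)) / (32 * t ^ 3) := by
  have h0 := integral_exp_mul_cos ht 0
  have h1 := integral_exp_mul_cos ht 1
  have h2 := integral_exp_mul_cos ht 2
  have h3 := integral_exp_mul_cos ht 3
  have e : ∀ u : ℝ, Real.exp (-(t * u)) * Real.sin (u / 2) ^ 6 =
      (10 / 32) * (Real.exp (-(t * u)) * Real.cos (0 * u))
      + (6 / 32) * (Real.exp (-(t * u)) * Real.cos (2 * u))
      - (15 / 32) * (Real.exp (-(t * u)) * Real.cos (1 * u))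
      - (1 / 32) * (Real.exp (-(t * u)) * Real.cos (3 * u)) := by
    intro u
    rw [sin_half_pow_six, zero_mul, Real.cos_zero, one_mul]
    ring
  simp_rw [e]
  have hc := integral_comb h0.1 h2.1 h1.1 (10 / 32) (6 / 32) (15 / 32)
  rw [integral_sub hc.1 (h3.1.const_mul _), hc.2, integral_const_mul, h0.2, h1.2, h2.2, h3.2]
  field_simp
  ring

/-- The Mellin-type integral giving the constant `C₆₁`. With `Γ(s+1) u^{-s-1} = ∫₀^∞ t^s e^{-tu} dt`
it becomes the integral of `t^s` against the Laplace transform of `sin⁶(u/2)`, that is, a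
combination of the integrals of `t^{s-3} / (t² + k²)`, `k = 1, 2, 3`, each convergent as `2 < s < 4`. -/
theorem integral_rpow_mul_sin_half_pow_six {s : ℝ} (hs2 : 2 < s) (hs4 : s < 4) :
    IntegrableOn (fun u : ℝ => u ^ (-s - 1) * Real.sin (u / 2) ^ 6) (Set.Ioi 0) ∧
      ∫ u in Set.Ioi 0, u ^ (-s - 1) * Real.sin (u / 2) ^ 6 =
        Real.pi * (15 - 6 * 2 ^ s + 3 ^ s) /
          (64 * (s * Real.Gamma s) * Real.sin (s * Real.pi / 2)) := by
  have hΓ : 0 < Real.Gamma (s + 1) := Real.Gamma_pos_of_pos (by linarith)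
  have b1 := integral_rpow_div_sq_add_sq (p := s - 2) (by linarith) (by linarith) one_pos
  have b2 := integral_rpow_div_sq_add_sq (p := s - 2) (by linarith) (by linarith) two_pos
  have b3 := integral_rpow_div_sq_add_sq (p := s - 2) (by linarith) (by linarith) three_pos
  have hc := integral_comb b1.1 b2.1 b3.1 (-15 / 32) (96 / 32) (81 / 32)
  have e : ∀ t ∈ Set.Ioi (0 : ℝ),
      (-15 / 32) * (t ^ (s - 2 - 1) / (t ^ 2 + 1 ^ 2))
      + (96 / 32) * (t ^ (s - 2 - 1) / (t ^ 2 + 2 ^ 2))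
      - (81 / 32) * (t ^ (s - 2 - 1) / (t ^ 2 + 3 ^ 2)) =
      t ^ s * ((-15 / (t ^ 2 + 1 ^ 2) + 96 / (t ^ 2 + 2 ^ 2) - 81 / (t ^ 2 + 3 ^ 2))
        / (32 * t ^ 3)) := by
    intro t ht
    have ht : 0 < t := ht
    rw [show s - 2 - 1 = s - (3 : ℕ) by push_cast; ring, Real.rpow_sub_natCast ht.ne']
    field_simp
  have key := tonelli_Ioi
    (f := fun t u : ℝ => t ^ s * (Real.exp (-(t * u)) * Real.sin (u / 2) ^ 6))
    (g := fun t : ℝ => (-15 / 32) * (t ^ (s - 2 - 1) / (t ^ 2 + 1 ^ 2))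
      + (96 / 32) * (t ^ (s - 2 - 1) / (t ^ 2 + 2 ^ 2))
      - (81 / 32) * (t ^ (s - 2 - 1) / (t ^ 2 + 3 ^ 2)))
    (h := fun u : ℝ => Real.Gamma (s + 1) * (u ^ (-s - 1) * Real.sin (u / 2) ^ 6))
    (by simp only [Function.uncurry_def]; fun_prop)
    (fun t ht u hu => by have : 0 < t := ht; positivity) ?_ ?_ ?_
    hc.1
  · constructor
    · refine IntegrableOn.congr_fun (key.1.const_mul (Real.Gamma (s + 1))⁻¹) (fun u _ => ?_)
        measurableSet_Ioi
      exact inv_mul_cancel_left₀ hΓ.ne' _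
    · have h2 := key.2
      rw [integral_const_mul, hc.2, b1.2, b2.2, b3.2] at h2
      have hsin : Real.sin (Real.pi * ((s - 2) / 2)) = - Real.sin (s * Real.pi / 2) := by
        rw [show Real.pi * ((s - 2) / 2) = s * Real.pi / 2 - Real.pi by ring, Real.sin_sub_pi]
      have hne : Real.sin (s * Real.pi / 2) ≠ 0 := by
        have : 0 < Real.sin (Real.pi * ((s - 2) / 2)) :=
          Real.sin_pos_of_pos_of_lt_pi (mul_pos Real.pi_pos (by linarith))
            (by nlinarith [Real.pi_pos])
        rw [hsin] at this
        linarith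
      have hΓs : Real.Gamma s ≠ 0 := (Real.Gamma_pos_of_pos (by linarith)).ne'
      have hs0 : s ≠ 0 := by linarith
      rw [hsin, Real.Gamma_add_one hs0, Real.one_rpow,
        show s - 2 - 2 = s - (4 : ℕ) by push_cast; ring,
        Real.rpow_sub_natCast two_ne_zero, Real.rpow_sub_natCast three_ne_zero] at h2
      rw [eq_div_iff (by positivity)]
      field_simp at h2
      linear_combination (1 / 1296) * h2
  · intro t ht
    -- The integrand is dominated by `exp (-(t * u))`, the case `k = 0` of `integral_exp_mul_cos`.
    have := (integrable_congr (f := fun u : ℝ => Real.exp (-(t * u)) * Real.cos (0 * u))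
      (μ := volume.restrict (Set.Ioi 0)) (.of_forall fun u => by
        simp only [zero_mul, Real.cos_zero, mul_one]; rfl)).1 (integral_exp_mul_cos ht 0).1
    refine Integrable.const_mul (Integrable.mono' this (by fun_prop) (.of_forall fun u => ?_)) _
    rw [norm_mul, Real.norm_of_nonneg (Real.exp_nonneg _), norm_pow]
    exact mul_le_of_le_one_right (Real.exp_nonneg _)
      (pow_le_one₀ (norm_nonneg _) (Real.abs_sin_le_one _))
  · intro t ht
    rw [integral_const_mul, integral_exp_mul_sin_half_pow_six ht]
    exact (e t ht).symm
  · intro u hu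
    have hu : 0 < u := hu
    have := Real.integral_rpow_mul_exp_neg_mul_Ioi (a := s + 1) (r := u) (by linarith) hu
    simp only [← mul_assoc]
    rw [integral_mul_const]
    simp only [mul_comm _ u]
    rw [add_sub_cancel_right] at this
    rw [this, one_div, Real.inv_rpow hu.le, ← Real.rpow_neg hu.le]
    ring_nf

/-- The integrand of the error term: at `0` it is at most `u^a`, at `∞` at most `u^(a-2)`. -/
theorem integrableOn_rpow_sub_two {a : ℝ} (ha : -1 < a) (ha1 : a < 1) :
    IntegrableOn (fun u : ℝ => u ^ (a - 2) * Real.sin (u / 2) ^ 6) (Set.Ioi 0) := by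
  rw [← Set.Ioc_union_Ioi_eq_Ioi zero_le_one]
  refine IntegrableOn.union ?_ ?_
  · have := (intervalIntegral.intervalIntegrable_rpow' (a := 0) (b := 1) ha).1
    refine Integrable.mono' this (by fun_prop) ?_
    filter_upwards [ae_restrict_mem measurableSet_Ioc] with u hu
    have hu0 : 0 < u := hu.1
    rw [norm_mul, Real.norm_of_nonneg (by positivity), norm_pow, Real.norm_eq_abs]
    have h1 : |Real.sin (u / 2)| ≤ u := by
      refine Real.abs_sin_le_abs.trans ?_
      rw [abs_of_pos (by positivity)]; linarith
    have h2 : |Real.sin (u / 2)| ^ 6 ≤ u ^ 2 := calc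
      _ ≤ |Real.sin (u / 2)| ^ 2 :=
        pow_le_pow_of_le_one (abs_nonneg _) (Real.abs_sin_le_one _) (by norm_num)
      _ ≤ u ^ 2 := by gcongr
    calc u ^ (a - 2) * |Real.sin (u / 2)| ^ 6 ≤ u ^ (a - 2) * u ^ 2 := by gcongr
      _ = u ^ a := by
        rw [← Real.rpow_natCast u 2, ← Real.rpow_add hu0]; congr 1; push_cast; ring
  · have := integrableOn_Ioi_rpow_of_lt (a := a - 2) (by linarith) one_pos
    refine Integrable.mono' this (by fun_prop) ?_
    filter_upwards [ae_restrict_mem measurableSet_Ioi] with u hu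
    have hu0 : 0 < u := one_pos.trans hu
    rw [norm_mul, Real.norm_of_nonneg (by positivity), norm_pow]
    exact mul_le_of_le_one_right (by positivity)
      (pow_le_one₀ (norm_nonneg _) (Real.abs_sin_le_one _))

theorem integral_rpow_mul_sin_scale {r c : ℝ} (hc : 0 < c)
    (h : IntegrableOn (fun u : ℝ => u ^ r * Real.sin (u / 2) ^ 6) (Set.Ioi 0)) :
    IntegrableOn (fun x : ℝ => x ^ r * Real.sin (c * x / 2) ^ 6) (Set.Ioi 0) ∧
      ∫ x in Set.Ioi 0, x ^ r * Real.sin (c * x / 2) ^ 6 =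
        c ^ (-r - 1) * ∫ u in Set.Ioi 0, u ^ r * Real.sin (u / 2) ^ 6 := by
  have e : ∀ x ∈ Set.Ioi (0 : ℝ), c ^ (-r) * ((c * x) ^ r * Real.sin (c * x / 2) ^ 6) =
      x ^ r * Real.sin (c * x / 2) ^ 6 := by
    intro x hx
    have hx : 0 < x := hx
    rw [Real.mul_rpow hc.le hx.le, Real.rpow_neg hc.le]
    have := (Real.rpow_pos_of_pos hc r).ne'
    field_simp
  constructor
  · have := (integrableOn_Ioi_comp_mul_left_iff
      (fun u : ℝ => u ^ r * Real.sin (u / 2) ^ 6) 0 hc).2 (by simpa using h)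
    exact IntegrableOn.congr_fun (this.const_mul (c ^ (-r))) e measurableSet_Ioi
  · have := integral_comp_mul_left_Ioi (fun u : ℝ => u ^ r * Real.sin (u / 2) ^ 6) 0 hc
    rw [← setIntegral_congr_fun measurableSet_Ioi e, integral_const_mul, this, mul_zero,
      smul_eq_mul, Real.rpow_sub_one hc.ne']
    ring

/-- `1 / sin⁴ y = 1 / y⁴ + O(1 / y²)` on `(0, π/2]`, with the error of a definite sign. -/
theorem inv_sin_pow_four_bound {y : ℝ} (hy : 0 < y) (hy' : y ≤ Real.pi / 2) :
    1 / y ^ 4 ≤ 1 / Real.sin y ^ 4 ∧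
      1 / Real.sin y ^ 4 ≤ 1 / y ^ 4 + (Real.pi / 2) ^ 4 / y ^ 2 := by
  have hs : 2 / Real.pi * y ≤ Real.sin y := Real.mul_le_sin hy.le hy'
  have hs0 : 0 < Real.sin y := lt_of_lt_of_le (by positivity) hs
  have hlt := Real.sin_lt hy
  have hcub := Real.sin_gt_sub_cube hy
  refine ⟨by gcongr, ?_⟩
  have h6 : y ^ 4 - Real.sin y ^ 4 ≤ y ^ 6 := by
    have h1 : y - Real.sin y ≤ y ^ 3 / 4 := by nlinarith [pow_pos hy 3]
    calc y ^ 4 - Real.sin y ^ 4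
        = (y - Real.sin y) * ((y + Real.sin y) * (y ^ 2 + Real.sin y ^ 2)) := by ring
      _ ≤ (y ^ 3 / 4) * ((y + y) * (y ^ 2 + y ^ 2)) := by gcongr
      _ = y ^ 6 := by ring
  have h4 : y ^ 4 ≤ (Real.pi / 2) ^ 4 * Real.sin y ^ 4 := by
    rw [← mul_pow]
    refine pow_le_pow_left₀ hy.le ?_ 4
    calc y = Real.pi / 2 * (2 / Real.pi * y) := by field_simp
      _ ≤ _ := by gcongr
  have : 1 / Real.sin y ^ 4 - 1 / y ^ 4 ≤ (Real.pi / 2) ^ 4 / y ^ 2 := calc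
    1 / Real.sin y ^ 4 - 1 / y ^ 4 = (y ^ 4 - Real.sin y ^ 4) / (Real.sin y ^ 4 * y ^ 4) := by
      field_simp
    _ ≤ y ^ 6 / (Real.sin y ^ 4 * y ^ 4) := by gcongr
    _ = y ^ 4 / (Real.sin y ^ 4 * y ^ 2) := by field_simp
    _ ≤ (Real.pi / 2) ^ 4 * Real.sin y ^ 4 / (Real.sin y ^ 4 * y ^ 2) := by gcongr
    _ = _ := by field_simp
  linarith

theorem integrand_bound {a c x : ℝ} (hx : 0 < x) (hx' : x ≤ Real.pi) :
    |x ^ a * Real.sin (c * x / 2) ^ 6 / Real.sin (x / 2) ^ 4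
      - 16 * (x ^ (a - 4) * Real.sin (c * x / 2) ^ 6)| ≤
      4 * (Real.pi / 2) ^ 4 * (x ^ (a - 2) * Real.sin (c * x / 2) ^ 6) := by
  obtain ⟨h1, h2⟩ := inv_sin_pow_four_bound (y := x / 2) (by positivity) (by linarith)
  have e4 : x ^ (a - 4) = x ^ a / x ^ 4 := by
    rw [show a - 4 = a - (4 : ℕ) by push_cast; ring, Real.rpow_sub_natCast hx.ne']
  have e2 : x ^ (a - 2) = x ^ a / x ^ 2 := by
    rw [show a - 2 = a - (2 : ℕ) by push_cast; ring, Real.rpow_sub_natCast hx.ne']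
  have hA : 0 ≤ x ^ a * Real.sin (c * x / 2) ^ 6 := by positivity
  have e : x ^ a * Real.sin (c * x / 2) ^ 6 / Real.sin (x / 2) ^ 4
      - 16 * (x ^ (a - 4) * Real.sin (c * x / 2) ^ 6) =
      (x ^ a * Real.sin (c * x / 2) ^ 6) * (1 / Real.sin (x / 2) ^ 4 - 1 / (x / 2) ^ 4) := by
    rw [e4]; field_simp; ring
  rw [e, abs_of_nonneg (mul_nonneg hA (by linarith)), e2]
  calc _ ≤ (x ^ a * Real.sin (c * x / 2) ^ 6) * ((Real.pi / 2) ^ 4 / (x / 2) ^ 2) :=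
        mul_le_mul_of_nonneg_left (by linarith) hA
    _ = _ := by field_simp; ring

/-- For `a ∈ (-1,1)`, `J₆(a,m) = C₆₁(a) m^{3-a} + O(m^{1-a})` as the integer `m → ∞`,
where `C₆₁(a) = π(15 - 6·2^{3-a} + 3^{3-a})/(4(3-a) Γ(3-a) sin((3-a)π/2))`. -/
theorem stmt_4 (a : ℝ) (ha : a ∈ Set.Ioo (-1 : ℝ) 1) :
    (fun m : ℕ => J6 a m -
        Real.pi * (15 - 6 * 2 ^ (3 - a) + 3 ^ (3 - a)) /
          (4 * (3 - a) * Real.Gamma (3 - a) * Real.sin ((3 - a) * Real.pi / 2)) * (m : ℝ) ^ (3 - a))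
      =O[atTop] fun m : ℕ => (m : ℝ) ^ (1 - a) := by
  obtain ⟨ha0, ha1⟩ := ha
  have hI := integral_rpow_mul_sin_half_pow_six (s := 3 - a) (by linarith) (by linarith)
  rw [show -(3 - a) - 1 = a - 4 by ring] at hI
  have hR := integrableOn_rpow_sub_two ha0 ha1
  set K : ℝ := 4 * (Real.pi / 2) ^ 4 with hK
  set B : ℝ := ∫ u in Set.Ioi 0, u ^ (a - 2) * Real.sin (u / 2) ^ 6
  have hT := integrableOn_Ioi_rpow_of_lt (a := a - 4) (by linarith) Real.pi_pos
  set T : ℝ := ∫ x in Set.Ioi Real.pi, x ^ (a - 4)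
  have hT0 : 0 ≤ T := setIntegral_nonneg measurableSet_Ioi fun x hx => by
    have : 0 < x := Real.pi_pos.trans hx
    positivity
  refine IsBigO.of_bound (K * B + 16 * T) ?_
  filter_upwards [eventually_ge_atTop 1] with m hm
  have hm1 : (1 : ℝ) ≤ m := by exact_mod_cast hm
  have hm0 : (0 : ℝ) < m := by linarith
  obtain ⟨hGi, hGe⟩ := integral_rpow_mul_sin_scale hm0 hI.1
  obtain ⟨hEi, hEe⟩ := integral_rpow_mul_sin_scale hm0 hR
  rw [hI.2, show -(a - 4) - 1 = 3 - a by ring] at hGe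
  rw [show -(a - 2) - 1 = 1 - a by ring] at hEe
  set G : ℝ → ℝ := fun x => x ^ (a - 4) * Real.sin (m * x / 2) ^ 6
  set E : ℝ → ℝ := fun x => x ^ (a - 2) * Real.sin (m * x / 2) ^ 6
  set F : ℝ → ℝ := fun x => x ^ a * Real.sin (m * x / 2) ^ 6 / Real.sin (x / 2) ^ 4
  have hsub1 : Set.Ioc 0 Real.pi ⊆ Set.Ioi 0 := Set.Ioc_subset_Ioi_self
  have hsub2 : Set.Ioi Real.pi ⊆ Set.Ioi 0 := Set.Ioi_subset_Ioi Real.pi_pos.le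
  have hG1 : IntegrableOn G (Set.Ioc 0 Real.pi) := hGi.mono_set hsub1
  have hG2 : IntegrableOn G (Set.Ioi Real.pi) := hGi.mono_set hsub2
  have hE1 : IntegrableOn E (Set.Ioc 0 Real.pi) := hEi.mono_set hsub1
  have hFG : ∀ᵐ x ∂volume.restrict (Set.Ioc 0 Real.pi), ‖F x - 16 * G x‖ ≤ K * E x := by
    filter_upwards [ae_restrict_mem measurableSet_Ioc] with x hx
    exact integrand_bound hx.1 hx.2
  have hD : IntegrableOn (fun x => F x - 16 * G x) (Set.Ioc 0 Real.pi) :=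
    Integrable.mono' (hE1.const_mul K) (by fun_prop) hFG
  have hsplit : ∫ x in Set.Ioi 0, G x =
      (∫ x in Set.Ioc 0 Real.pi, G x) + ∫ x in Set.Ioi Real.pi, G x := by
    rw [← Set.Ioc_union_Ioi_eq_Ioi Real.pi_pos.le]
    exact setIntegral_union (Set.Ioc_disjoint_Ioi le_rfl) measurableSet_Ioi hG1 hG2
  have hJ : J6 a m = (∫ x in Set.Ioc 0 Real.pi, (F x - 16 * G x)) +
      16 * ∫ x in Set.Ioc 0 Real.pi, G x := by
    rw [← integral_const_mul, ← integral_add hD (hG1.const_mul 16)]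
    simp only [sub_add_cancel]
    exact intervalIntegral.integral_of_le Real.pi_pos.le
  have hb1 : ‖∫ x in Set.Ioc 0 Real.pi, (F x - 16 * G x)‖ ≤ K * ((m : ℝ) ^ (1 - a) * B) := by
    refine (norm_integral_le_of_norm_le (hE1.const_mul K) hFG).trans ?_
    rw [integral_const_mul, ← hEe]
    refine mul_le_mul_of_nonneg_left ?_ (by positivity)
    refine setIntegral_mono_set hEi ?_ hsub1.eventuallyLE
    filter_upwards [ae_restrict_mem measurableSet_Ioi] with x hx
    have : 0 < x := hx
    simp only [Pi.zero_apply, E]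
    positivity
  have hb2 : ‖∫ x in Set.Ioi Real.pi, G x‖ ≤ T := by
    refine norm_integral_le_of_norm_le hT ?_
    filter_upwards [ae_restrict_mem measurableSet_Ioi] with x hx
    have : 0 < x := Real.pi_pos.trans hx
    simp only [G]
    rw [norm_mul, Real.norm_of_nonneg (by positivity), norm_pow]
    exact mul_le_of_le_one_right (by positivity)
      (pow_le_one₀ (norm_nonneg _) (Real.abs_sin_le_one _))
  have hp1 : 1 ≤ (m : ℝ) ^ (1 - a) := Real.one_le_rpow hm1 (by linarith)
  -- The constant times `m^(3-a)` is `16 ∫₀^∞ G`, and its part over `(0, π]` has been absorbed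
  -- in the comparison of `F` with `16 G`.
  have hmain : J6 a m -
        Real.pi * (15 - 6 * 2 ^ (3 - a) + 3 ^ (3 - a)) /
          (4 * (3 - a) * Real.Gamma (3 - a) * Real.sin ((3 - a) * Real.pi / 2)) * (m : ℝ) ^ (3 - a)
      = (∫ x in Set.Ioc 0 Real.pi, (F x - 16 * G x)) - 16 * ∫ x in Set.Ioi Real.pi, G x := by
    have hC : Real.pi * (15 - 6 * 2 ^ (3 - a) + 3 ^ (3 - a)) /
          (4 * (3 - a) * Real.Gamma (3 - a) * Real.sin ((3 - a) * Real.pi / 2)) * (m : ℝ) ^ (3 - a)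
        = 16 * ∫ x in Set.Ioi 0, G x := by
      rw [hGe]
      simp only [div_eq_mul_inv, mul_inv]
      ring
    rw [hC, hsplit, hJ]
    ring
  rw [hmain, Real.norm_of_nonneg (by positivity : (0 : ℝ) ≤ (m : ℝ) ^ (1 - a))]
  refine (norm_sub_le _ _).trans ?_
  rw [norm_mul, Real.norm_of_nonneg (by norm_num : (0 : ℝ) ≤ 16)]
  nlinarith [mul_le_mul_of_nonneg_left hp1 hT0]
end

section
/- For every a ∈ (1,3), as m → ∞ one has J₄(a,m) = C'₄₁(a)·m^{3−a} + O(1), where C'₄₁(a) := 6/(3−a) + 16·∫₀^1 sin⁴(y/2)/y^{4−a} dy + 2·∫₁^∞ y^{a−4}(−4cos y + cos 2y) dy. -/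
/-!
Since `16 sin⁴(y/2) = 6 - 8 cos y + 2 cos 2y`, the constant is
`C'₄₁(a) = 16 ∫₀^∞ y^{a-4} sin⁴(y/2) dy` (`C41'_eq`), and the substitution `y = m x` gives
`C'₄₁(a) m^{3-a} = 16 ∫₀^∞ x^{a-4} sin⁴(mx/2) dx` (`C41'_mul_rpow`). Hence
`J₄(a,m) - C'₄₁(a) m^{3-a}` is the difference of
`∫₀^π x^a sin⁴(mx/2) (1/sin⁴(x/2) - 16/x⁴) dx` and `16 ∫_π^∞ x^{a-4} sin⁴(mx/2) dx`.
As `0 ≤ 1/sin⁴(x/2) - 16/x⁴ ≤ 256/x²` on `(0, π]`, the first integral is at most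
`256 ∫₀^π x^{a-2} dx`, finite because `a > 1`; the second is at most `16 ∫_π^∞ x^{a-4} dx`,
finite because `a < 3`. Neither bound depends on `m`.
-/

open MeasureTheory Filter Asymptotics

/-- `C'₄₁(a) := 6/(3-a) + 16 ∫₀^1 sin⁴(y/2)/y^{4-a} dy + 2 ∫₁^∞ y^{a-4}(-4 cos y + cos 2y) dy`. -/
noncomputable def C41' (a : ℝ) : ℝ :=
  6 / (3 - a) + 16 * (∫ y in (0 : ℝ)..1, Real.sin (y / 2) ^ 4 / y ^ (4 - a))
    + 2 * (∫ y in Set.Ioi (1 : ℝ), y ^ (a - 4) * (-4 * Real.cos y + Real.cos (2 * y)))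

/-- The model integrand `x^{a-4} sin⁴(mx/2)`, in which `1/sin⁴(x/2)` has been replaced by `1/x⁴`
(up to the factor `16`). -/
noncomputable def modelIntegrand (a m x : ℝ) : ℝ := x ^ (a - 4) * Real.sin (m * x / 2) ^ 4

lemma measurable_modelIntegrand (a m : ℝ) : Measurable (modelIntegrand a m) := by
  unfold modelIntegrand; fun_prop

lemma modelIntegrand_nonneg (a m : ℝ) {x : ℝ} (hx : 0 < x) : 0 ≤ modelIntegrand a m x := by
  unfold modelIntegrand; positivity

lemma sin_pow_four_le_one (t : ℝ) : Real.sin t ^ 4 ≤ 1 := by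
  have h : |Real.sin t| ^ 4 ≤ 1 := pow_le_one₀ (abs_nonneg _) (Real.abs_sin_le_one t)
  rwa [Even.pow_abs (by decide)] at h

lemma modelIntegrand_le (a m : ℝ) {x : ℝ} (hx : 0 < x) :
    modelIntegrand a m x ≤ x ^ (a - 4) :=
  mul_le_of_le_one_right (by positivity) (sin_pow_four_le_one _)

lemma modelIntegrand_le' (a m : ℝ) {x : ℝ} (hx : 0 < x) :
    modelIntegrand a m x ≤ (m / 2) ^ 4 * x ^ a := by
  have h : |Real.sin (m * x / 2)| ^ 4 ≤ |m * x / 2| ^ 4 :=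
    pow_le_pow_left₀ (abs_nonneg _) Real.abs_sin_le_abs 4
  rw [Even.pow_abs (by decide), Even.pow_abs (by decide)] at h
  have e : x ^ (a - 4) * x ^ 4 = x ^ a := by
    rw [← Real.rpow_natCast x 4, ← Real.rpow_add hx]; norm_num
  calc modelIntegrand a m x ≤ x ^ (a - 4) * (m * x / 2) ^ 4 := by
        unfold modelIntegrand; gcongr
    _ = (m / 2) ^ 4 * (x ^ (a - 4) * x ^ 4) := by ring
    _ = _ := by rw [e]

lemma integrableOn_Ioc_rpow {s : ℝ} (hs : -1 < s) {c : ℝ} (hc : 0 ≤ c) :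
    IntegrableOn (fun x : ℝ => x ^ s) (Set.Ioc 0 c) :=
  (intervalIntegrable_iff_integrableOn_Ioc_of_le hc).1
    (intervalIntegral.intervalIntegrable_rpow' hs)

lemma integrableOn_modelIntegrand_Ioi {a : ℝ} (ha : a < 3) (m : ℝ) {c : ℝ} (hc : 0 < c) :
    IntegrableOn (modelIntegrand a m) (Set.Ioi c) := by
  refine Integrable.mono' (integrableOn_Ioi_rpow_of_lt (a := a - 4) (by linarith) hc)
    (measurable_modelIntegrand a m).aestronglyMeasurable ?_
  refine (ae_restrict_iff' measurableSet_Ioi).2 (ae_of_all _ fun x hx => ?_)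
  have hx0 : 0 < x := hc.trans hx
  rw [Real.norm_of_nonneg (modelIntegrand_nonneg a m hx0)]
  exact modelIntegrand_le a m hx0

lemma integrableOn_modelIntegrand_Ioc {a : ℝ} (ha : -1 < a) (m : ℝ) {c : ℝ} (hc : 0 ≤ c) :
    IntegrableOn (modelIntegrand a m) (Set.Ioc 0 c) := by
  refine Integrable.mono' ((integrableOn_Ioc_rpow ha hc).const_mul ((m / 2) ^ 4))
    (measurable_modelIntegrand a m).aestronglyMeasurable ?_
  refine (ae_restrict_iff' measurableSet_Ioc).2 (ae_of_all _ fun x hx => ?_)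
  rw [Real.norm_of_nonneg (modelIntegrand_nonneg a m hx.1)]
  exact modelIntegrand_le' a m hx.1

lemma setIntegral_modelIntegrand_Ioi_zero {a : ℝ} (ha : -1 < a) (ha3 : a < 3) (m : ℝ) {c : ℝ}
    (hc : 0 < c) :
    ∫ x in Set.Ioi 0, modelIntegrand a m x =
      (∫ x in Set.Ioc 0 c, modelIntegrand a m x) + ∫ x in Set.Ioi c, modelIntegrand a m x := by
  rw [← Set.Ioc_union_Ioi_eq_Ioi hc.le]
  exact setIntegral_union (Set.Ioc_disjoint_Ioi le_rfl) measurableSet_Ioi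
    (integrableOn_modelIntegrand_Ioc ha m hc.le) (integrableOn_modelIntegrand_Ioi ha3 m hc)

lemma sixteen_mul_sin_pow_four (y : ℝ) :
    16 * Real.sin (y / 2) ^ 4 = 6 + 2 * (-4 * Real.cos y + Real.cos (2 * y)) := by
  have h : Real.cos y = 1 - 2 * Real.sin (y / 2) ^ 2 := by
    rw [← Real.cos_sq_add_sin_sq (y / 2)]
    conv_lhs => rw [show y = 2 * (y / 2) by ring, Real.cos_two_mul']
    ring
  rw [Real.cos_two_mul, h]; ring

lemma C41'_eq {a : ℝ} (ha : -1 < a) (ha3 : a < 3) :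
    C41' a = 16 * ∫ y in Set.Ioi 0, modelIntegrand a 1 y := by
  have h1 : ∫ y in (0 : ℝ)..1, Real.sin (y / 2) ^ 4 / y ^ (4 - a) =
      ∫ y in Set.Ioc 0 1, modelIntegrand a 1 y := by
    rw [intervalIntegral.integral_of_le zero_le_one]
    refine setIntegral_congr_fun measurableSet_Ioc fun y hy => ?_
    simp only [modelIntegrand, one_mul]
    rw [show a - 4 = -(4 - a) by ring, Real.rpow_neg hy.1.le]
    ring
  have hp : IntegrableOn (fun y : ℝ => y ^ (a - 4)) (Set.Ioi 1) :=
    integrableOn_Ioi_rpow_of_lt (by linarith) one_pos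
  have hf := integrableOn_modelIntegrand_Ioi ha3 1 one_pos
  have h2 : 2 * (∫ y in Set.Ioi (1 : ℝ), y ^ (a - 4) * (-4 * Real.cos y + Real.cos (2 * y))) =
      16 * (∫ y in Set.Ioi 1, modelIntegrand a 1 y) - 6 * ∫ y in Set.Ioi (1 : ℝ), y ^ (a - 4) := by
    rw [← integral_const_mul, ← integral_const_mul, ← integral_const_mul,
      ← integral_sub (hf.const_mul 16) (hp.const_mul 6)]
    refine integral_congr_ae (ae_of_all _ fun y => ?_)
    simp only [modelIntegrand, one_mul]
    linear_combination -y ^ (a - 4) * sixteen_mul_sin_pow_four y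
  have h3 : ∫ y in Set.Ioi (1 : ℝ), y ^ (a - 4) = 1 / (3 - a) := by
    rw [integral_Ioi_rpow_of_lt (by linarith) one_pos, Real.one_rpow,
      show a - 4 + 1 = -(3 - a) by ring, neg_div_neg_eq]
  rw [C41', h1, h2, h3, setIntegral_modelIntegrand_Ioi_zero ha ha3 1 one_pos]
  ring

lemma C41'_mul_rpow {a : ℝ} (ha : -1 < a) (ha3 : a < 3) {m : ℝ} (hm : 0 < m) :
    C41' a * m ^ (3 - a) = 16 * ∫ x in Set.Ioi 0, modelIntegrand a m x := by
  have h := integral_comp_mul_left_Ioi (modelIntegrand a 1) 0 hm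
  rw [mul_zero, smul_eq_mul] at h
  have h' : ∫ x in Set.Ioi 0, modelIntegrand a 1 (m * x) =
      m ^ (a - 4) * ∫ x in Set.Ioi 0, modelIntegrand a m x := by
    rw [← integral_const_mul]
    refine setIntegral_congr_fun measurableSet_Ioi fun x hx => ?_
    simp only [modelIntegrand, one_mul]
    rw [Real.mul_rpow hm.le (le_of_lt hx), mul_assoc]
  have e : ∫ x in Set.Ioi 0, modelIntegrand a 1 x =
      m * m ^ (a - 4) * ∫ x in Set.Ioi 0, modelIntegrand a m x := by
    rw [mul_assoc, ← h', h]; field_simp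
  have e2 : m * m ^ (a - 4) * m ^ (3 - a) = 1 := by
    rw [← Real.rpow_one_add' hm.le (by linarith), ← Real.rpow_add hm,
      show 1 + (a - 4) + (3 - a) = 0 by ring, Real.rpow_zero]
  rw [C41'_eq ha ha3, e]
  linear_combination (16 * ∫ x in Set.Ioi 0, modelIntegrand a m x) * e2

/-- The pole of `1/sin⁴ u` at `0` is that of `1/u⁴` up to `O(u⁻²)`, because
`u⁴ - sin⁴ u = (u - sin u)(u + sin u)(u² + sin² u) ≤ u³ · 2u · 2u²` and `sin u ≥ u/2`. -/
lemma inv_sin_pow_four_bounds {u : ℝ} (hu : 0 < u) (hu' : u ≤ Real.pi / 2) :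
    0 ≤ 1 / Real.sin u ^ 4 - 1 / u ^ 4 ∧ 1 / Real.sin u ^ 4 - 1 / u ^ 4 ≤ 64 / u ^ 2 := by
  set s := Real.sin u with hs
  have hsu : s ≤ u := Real.sin_le hu.le
  have hsl : u / 2 ≤ s := by
    refine le_trans ?_ (Real.mul_le_sin hu.le hu')
    have : 1 / 2 ≤ 2 / Real.pi := by
      rw [div_le_div_iff₀ two_pos Real.pi_pos]; linarith [Real.pi_le_four]
    nlinarith
  have hs0 : 0 < s := by linarith
  have hcube : u - s ≤ u ^ 3 := by
    have h3 := Real.sin_gt_sub_cube hu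
    have : 0 < u ^ 3 := by positivity
    linarith
  have h4 : u ^ 4 - s ^ 4 ≤ 4 * u ^ 6 := by
    calc u ^ 4 - s ^ 4 = (u - s) * ((u + s) * (u ^ 2 + s ^ 2)) := by ring
      _ ≤ u ^ 3 * ((u + u) * (u ^ 2 + u ^ 2)) := by
          have : 0 ≤ u - s := by linarith
          gcongr
      _ = 4 * u ^ 6 := by ring
  have h16 : u ^ 4 / 16 ≤ s ^ 4 := by
    calc u ^ 4 / 16 = (u / 2) ^ 4 := by ring
      _ ≤ s ^ 4 := by gcongr
  constructor
  · have : 1 / u ^ 4 ≤ 1 / s ^ 4 := by gcongr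
    linarith
  · rw [div_sub_div _ _ (by positivity) (by positivity), div_le_div_iff₀ (by positivity)
      (by positivity)]
    calc (1 * u ^ 4 - s ^ 4 * 1) * u ^ 2 ≤ 4 * u ^ 6 * u ^ 2 := by
          gcongr; linarith
      _ = 64 * (u ^ 4 / 16 * u ^ 4) := by ring
      _ ≤ 64 * (s ^ 4 * u ^ 4) := by gcongr

lemma norm_integrand_sub_model_le (a m : ℝ) {x : ℝ} (hx : x ∈ Set.Ioc 0 Real.pi) :
    ‖x ^ a * Real.sin (m * x / 2) ^ 4 / Real.sin (x / 2) ^ 4 - 16 * modelIntegrand a m x‖ ≤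
      256 * x ^ (a - 2) := by
  obtain ⟨hx0, hxπ⟩ := hx
  obtain ⟨hl, hu⟩ := inv_sin_pow_four_bounds (u := x / 2) (by linarith) (by linarith)
  have e4 : x ^ (a - 4) = x ^ a / x ^ 4 := by
    rw [Real.rpow_sub hx0]; norm_cast
  have e2 : x ^ (a - 2) = x ^ a / x ^ 2 := by
    rw [Real.rpow_sub hx0]; norm_cast
  have e : x ^ a * Real.sin (m * x / 2) ^ 4 / Real.sin (x / 2) ^ 4 - 16 * modelIntegrand a m x =
      x ^ a * (Real.sin (m * x / 2) ^ 4 * (1 / Real.sin (x / 2) ^ 4 - 1 / (x / 2) ^ 4)) := by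
    rw [modelIntegrand, e4]; field_simp; ring
  rw [e, Real.norm_of_nonneg (by positivity)]
  calc _ ≤ x ^ a * (1 * (64 / (x / 2) ^ 2)) := by
        have := sin_pow_four_le_one (m * x / 2)
        gcongr
    _ = 256 * x ^ (a - 2) := by rw [e2]; field_simp; norm_num

/-- For `a ∈ (1,3)`, `J₄(a,m) = C'₄₁(a) m^{3-a} + O(1)` as the integer `m → ∞`. -/
theorem stmt_7 (a : ℝ) (ha : a ∈ Set.Ioo (1 : ℝ) 3) :
    (fun m : ℕ => J4 a m - C41' a * (m : ℝ) ^ (3 - a))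
      =O[atTop] fun _ : ℕ => (1 : ℝ) := by
  obtain ⟨ha1, ha3⟩ := ha
  have ha' : -1 < a := by linarith
  have hπ := Real.pi_pos
  refine IsBigO.of_bound ((∫ x in Set.Ioc 0 Real.pi, 256 * x ^ (a - 2)) +
    16 * ∫ x in Set.Ioi Real.pi, x ^ (a - 4)) ?_
  filter_upwards [eventually_gt_atTop 0] with m hm
  have hm' : (0 : ℝ) < m := by exact_mod_cast hm
  set d : ℝ → ℝ := fun x =>
    x ^ a * Real.sin (m * x / 2) ^ 4 / Real.sin (x / 2) ^ 4 - 16 * modelIntegrand a m x with hd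
  have hpow : IntegrableOn (fun x : ℝ => 256 * x ^ (a - 2)) (Set.Ioc 0 Real.pi) :=
    (integrableOn_Ioc_rpow (by linarith) hπ.le).const_mul 256
  have hbound : ∀ᵐ x ∂volume.restrict (Set.Ioc 0 Real.pi), ‖d x‖ ≤ 256 * x ^ (a - 2) :=
    (ae_restrict_iff' measurableSet_Ioc).2
      (ae_of_all _ fun x hx => norm_integrand_sub_model_le a m hx)
  have hdm : Measurable d := by
    have := measurable_modelIntegrand a m
    fun_prop
  have hdint : IntegrableOn d (Set.Ioc 0 Real.pi) :=
    Integrable.mono' hpow hdm.aestronglyMeasurable hbound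
  have hJ : J4 a m = (∫ x in Set.Ioc 0 Real.pi, d x) +
      16 * ∫ x in Set.Ioc 0 Real.pi, modelIntegrand a m x := by
    rw [J4, intervalIntegral.integral_of_le hπ.le, ← integral_const_mul,
      ← integral_add hdint ((integrableOn_modelIntegrand_Ioc ha' m hπ.le).const_mul 16)]
    simp [hd]
  have hdiff : J4 a m - C41' a * (m : ℝ) ^ (3 - a) = (∫ x in Set.Ioc 0 Real.pi, d x) -
      16 * ∫ x in Set.Ioi Real.pi, modelIntegrand a m x := by
    rw [hJ, C41'_mul_rpow ha' ha3 hm', setIntegral_modelIntegrand_Ioi_zero ha' ha3 m hπ]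
    ring
  have hA : ‖∫ x in Set.Ioc 0 Real.pi, d x‖ ≤ ∫ x in Set.Ioc 0 Real.pi, 256 * x ^ (a - 2) :=
    norm_integral_le_of_norm_le hpow hbound
  have hB : ‖∫ x in Set.Ioi Real.pi, modelIntegrand a m x‖ ≤
      ∫ x in Set.Ioi Real.pi, x ^ (a - 4) := by
    refine norm_integral_le_of_norm_le (integrableOn_Ioi_rpow_of_lt (by linarith) hπ)
      ((ae_restrict_iff' measurableSet_Ioi).2 (ae_of_all _ fun x hx => ?_))
    have hx0 : 0 < x := hπ.trans hx
    rw [Real.norm_of_nonneg (modelIntegrand_nonneg a m hx0)]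
    exact modelIntegrand_le a m hx0
  rw [hdiff, norm_one, mul_one]
  refine (norm_sub_le _ _).trans (add_le_add hA ?_)
  rw [norm_mul, Real.norm_of_nonneg (by norm_num : (0 : ℝ) ≤ 16)]
  gcongr
end

section
/- For every a ∈ (1,3), as m → ∞ one has J₆(a,m) = C'₆₁(a)·m^{3−a} + O(1), where C'₆₁(a) := 5/(3−a) + 16·∫₀^1 sin⁶(y/2)/y^{4−a} dy + (1/2)·∫₁^∞ y^{a−4}(−15cos y + 6cos 2y − cos 3y) dy. -/
/-! Near `0` one has `1 / sin⁴(x/2) = 16 / x⁴ + O(x⁻²)`, and the error stays `O(x⁻²)` on all of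
`(0, π]` (`abs_kernel_sub_le`). As `a > 1`, the function `x ^ (a - 2)` is integrable on `(0, π]`,
so replacing `1 / sin⁴(x/2)` by `16 / x⁴` in `J6 a m` costs `O(1)` uniformly in `m`. As `a < 3`, the
function `x ^ (a - 4)` is integrable on `(π, ∞)`, so extending the new integral from `(0, π]`
to `(0, ∞)` costs `O(1)` as well. What remains is `16 ∫₀^∞ x ^ (a - 4) sin⁶(m x / 2) dx`, which
the substitution `y = m x` turns into `m ^ (3 - a) · 16 ∫₀^∞ y ^ (a - 4) sin⁶(y / 2) dy`.
Splitting the last integral at `1` and linearizing `sin⁶` identifies the constant with `C61' a`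
(`C61'_eq`).
-/

open MeasureTheory Filter Asymptotics

/-- `C'₆₁(a) := 5/(3-a) + 16 ∫₀^1 sin⁶(y/2)/y^{4-a} dy
  + (1/2) ∫₁^∞ y^{a-4}(-15 cos y + 6 cos 2y - cos 3y) dy`. -/
noncomputable def C61' (a : ℝ) : ℝ :=
  5 / (3 - a) + 16 * (∫ y in (0 : ℝ)..1, Real.sin (y / 2) ^ 6 / y ^ (4 - a))
    + 1 / 2 * (∫ y in Set.Ioi (1 : ℝ),
        y ^ (a - 4) * (-15 * Real.cos y + 6 * Real.cos (2 * y) - Real.cos (3 * y)))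

lemma sin_pow_six_half (y : ℝ) : 16 * Real.sin (y / 2) ^ 6 =
    5 + 1 / 2 * (-15 * Real.cos y + 6 * Real.cos (2 * y) - Real.cos (3 * y)) := by
  have h : Real.sin (y / 2) ^ 2 = 1 / 2 - Real.cos y / 2 := by
    rw [Real.sin_sq_eq_half_sub]; ring_nf
  rw [show Real.sin (y / 2) ^ 6 = (Real.sin (y / 2) ^ 2) ^ 3 by ring, h, Real.cos_two_mul,
    Real.cos_three_mul]
  ring

lemma sin_pow_six_le_one (y : ℝ) : Real.sin y ^ 6 ≤ 1 := by
  have := pow_le_one₀ (n := 3) (sq_nonneg (Real.sin y)) (Real.sin_sq_le_one y)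
  calc Real.sin y ^ 6 = (Real.sin y ^ 2) ^ 3 := by ring
    _ ≤ 1 := this

lemma sin_pow_six_nonneg (y : ℝ) : 0 ≤ Real.sin y ^ 6 := by positivity

lemma rpow_sub_four_mul_pow_four {a x : ℝ} (hx : 0 < x) : x ^ (a - 4) * x ^ 4 = x ^ a := by
  rw [← Real.rpow_natCast, ← Real.rpow_add hx]; norm_num

lemma rpow_sub_two_mul_sq {a x : ℝ} (hx : 0 < x) : x ^ (a - 2) * x ^ 2 = x ^ a := by
  rw [← Real.rpow_natCast, ← Real.rpow_add hx]; norm_num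

lemma integrableOn_Ioi_rpow {a c : ℝ} (ha : a < 3) (hc : 0 < c) :
    IntegrableOn (fun x : ℝ => x ^ (a - 4)) (Set.Ioi c) :=
  integrableOn_Ioi_rpow_of_lt (by linarith) hc

/-- Near `0` the sixfold zero of the sine compensates the singularity of `y ^ (a - 4)`; at
infinity `y ^ (a - 4)` is itself integrable. -/
lemma integrableOn_main {a : ℝ} (ha1 : 1 < a) (ha3 : a < 3) :
    IntegrableOn (fun y : ℝ => y ^ (a - 4) * Real.sin (y / 2) ^ 6) (Set.Ioi 0) := by
  have hmeas : Measurable (fun y : ℝ => y ^ (a - 4) * Real.sin (y / 2) ^ 6) := by fun_prop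
  rw [← Set.Ioc_union_Ioi_eq_Ioi zero_le_one]
  refine IntegrableOn.union ?_ ?_
  · refine Integrable.mono' (g := fun _ => (1 : ℝ)) (by simp) hmeas.aestronglyMeasurable ?_
    filter_upwards [ae_restrict_mem measurableSet_Ioc] with y hy
    have hp := Real.rpow_nonneg hy.1.le (a - 4)
    rw [Real.norm_of_nonneg (mul_nonneg hp (sin_pow_six_nonneg _))]
    have h1 : |Real.sin (y / 2)| ≤ y := by
      refine Real.abs_sin_le_abs.trans ?_
      rw [abs_of_pos (by linarith [hy.1])]; linarith [hy.1]
    have h4 : Real.sin (y / 2) ^ 4 ≤ y ^ 4 := by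
      rw [← (by decide : Even 4).pow_abs]
      gcongr
    have h2 : Real.sin (y / 2) ^ 6 ≤ y ^ 4 := by
      calc Real.sin (y / 2) ^ 6 = Real.sin (y / 2) ^ 4 * Real.sin (y / 2) ^ 2 := by ring
        _ ≤ Real.sin (y / 2) ^ 4 * 1 := by gcongr; exact Real.sin_sq_le_one _
        _ ≤ y ^ 4 := by linarith
    calc y ^ (a - 4) * Real.sin (y / 2) ^ 6 ≤ y ^ (a - 4) * y ^ 4 := by gcongr
      _ = y ^ a := rpow_sub_four_mul_pow_four hy.1
      _ ≤ 1 := Real.rpow_le_one hy.1.le hy.2 (by linarith)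
  · refine Integrable.mono' (integrableOn_Ioi_rpow ha3 one_pos) hmeas.aestronglyMeasurable ?_
    filter_upwards [ae_restrict_mem measurableSet_Ioi] with y hy
    have hp := Real.rpow_nonneg (zero_le_one.trans (le_of_lt hy)) (a - 4)
    rw [Real.norm_of_nonneg (mul_nonneg hp (sin_pow_six_nonneg _))]
    exact mul_le_of_le_one_right hp (sin_pow_six_le_one _)

lemma C61'_eq {a : ℝ} (ha1 : 1 < a) (ha3 : a < 3) :
    C61' a = 16 * ∫ y in Set.Ioi (0 : ℝ), y ^ (a - 4) * Real.sin (y / 2) ^ 6 := by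
  have hint := integrableOn_main ha1 ha3
  have hpow := integrableOn_Ioi_rpow ha3 one_pos
  rw [← Set.Ioc_union_Ioi_eq_Ioi (zero_le_one (α := ℝ))] at hint ⊢
  rw [setIntegral_union (Set.Ioc_disjoint_Ioi le_rfl) measurableSet_Ioi
    hint.left_of_union hint.right_of_union]
  have h0 : (∫ y in (0 : ℝ)..1, Real.sin (y / 2) ^ 6 / y ^ (4 - a)) =
      ∫ y in Set.Ioc (0 : ℝ) 1, y ^ (a - 4) * Real.sin (y / 2) ^ 6 := by
    rw [intervalIntegral.integral_of_le zero_le_one]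
    refine setIntegral_congr_fun measurableSet_Ioc fun y hy => ?_
    rw [show a - 4 = -(4 - a) by ring, Real.rpow_neg hy.1.le, div_eq_mul_inv, mul_comm]
  have hlin : ∀ y : ℝ,
      y ^ (a - 4) * (-15 * Real.cos y + 6 * Real.cos (2 * y) - Real.cos (3 * y)) =
        32 * (y ^ (a - 4) * Real.sin (y / 2) ^ 6) - 10 * y ^ (a - 4) := fun y => by
    linear_combination (-2 * y ^ (a - 4)) * sin_pow_six_half y
  have h1 : (∫ y in Set.Ioi (1 : ℝ), y ^ (a - 4)) = 1 / (3 - a) := by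
    rw [integral_Ioi_rpow_of_lt (by linarith) one_pos, Real.one_rpow,
      show a - 4 + 1 = -(3 - a) by ring, div_neg, neg_div, neg_neg]
  rw [C61', h0]
  simp_rw [hlin]
  rw [integral_sub (hint.right_of_union.const_mul 32) (hpow.const_mul 10), integral_const_mul,
    integral_const_mul, h1]
  ring

/-- The estimate `1 / sin⁴ s = 1 / s⁴ + O(s⁻²)` on `(0, π/2]`, from `s - sin s ≤ s³` and
`sin s ≥ s / 2`. -/
lemma abs_inv_sin_pow_four_sub_le_s8 {s : ℝ} (hs : 0 < s) (hs2 : s ≤ Real.pi / 2) :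
    |1 / Real.sin s ^ 4 - 1 / s ^ 4| ≤ 64 / s ^ 2 := by
  have hlow : s / 2 ≤ Real.sin s := by
    refine le_trans ?_ (Real.mul_le_sin hs.le hs2)
    have : 1 / 2 ≤ 2 / Real.pi := by
      rw [div_le_div_iff₀ two_pos Real.pi_pos]; linarith [Real.pi_le_four]
    nlinarith
  have hup : Real.sin s ≤ s := Real.sin_le hs.le
  have hpos : 0 < Real.sin s := by linarith
  have hcube : s - Real.sin s ≤ s ^ 3 := by
    rcases le_or_gt s 1 with h | h
    · have := Real.sin_gt_sub_cube hs
      have h3 : 0 < s ^ 3 := by positivity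
      linarith
    · nlinarith [mul_pos hs (mul_pos (sub_pos.2 h) (by linarith : 0 < s + 1))]
  have hdiff : s ^ 4 - Real.sin s ^ 4 ≤ 4 * s ^ 6 := by
    calc s ^ 4 - Real.sin s ^ 4
        = (s - Real.sin s) * ((s + Real.sin s) * (s ^ 2 + Real.sin s ^ 2)) := by ring
      _ ≤ s ^ 3 * ((s + s) * (s ^ 2 + s ^ 2)) := by gcongr
      _ = 4 * s ^ 6 := by ring
  have h4 : Real.sin s ^ 4 ≤ s ^ 4 := by gcongr
  have h4' : (s / 2) ^ 4 ≤ Real.sin s ^ 4 := by gcongr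
  have heq : 1 / Real.sin s ^ 4 - 1 / s ^ 4 =
      (s ^ 4 - Real.sin s ^ 4) / (Real.sin s ^ 4 * s ^ 4) := by
    field_simp
  rw [heq, abs_of_nonneg (div_nonneg (by linarith) (by positivity))]
  calc (s ^ 4 - Real.sin s ^ 4) / (Real.sin s ^ 4 * s ^ 4)
      ≤ 4 * s ^ 6 / ((s / 2) ^ 4 * s ^ 4) := by gcongr
    _ = 64 / s ^ 2 := by field_simp; norm_num

lemma abs_kernel_sub_le {x : ℝ} (hx : x ∈ Set.Ioc 0 Real.pi) :
    |1 / Real.sin (x / 2) ^ 4 - 16 / x ^ 4| ≤ 256 / x ^ 2 := by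
  have h := abs_inv_sin_pow_four_sub_le_s8 (s := x / 2) (by linarith [hx.1]) (by linarith [hx.2])
  have hx0 := hx.1
  rw [show 16 / x ^ 4 = 1 / (x / 2) ^ 4 by field_simp; norm_num,
    show 256 / x ^ 2 = 64 / (x / 2) ^ 2 by field_simp; norm_num]
  exact h

/-- For `a ∈ (1,3)`, `J₆(a,m) = C'₆₁(a) m^{3-a} + O(1)` as the integer `m → ∞`. -/
theorem stmt_8 (a : ℝ) (ha : a ∈ Set.Ioo (1 : ℝ) 3) :
    (fun m : ℕ => J6 a m - C61' a * (m : ℝ) ^ (3 - a))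
      =O[atTop] fun _ : ℕ => (1 : ℝ) := by
  obtain ⟨ha1, ha3⟩ := ha
  refine IsBigO.of_bound ((∫ x in Set.Ioc 0 Real.pi, 256 * x ^ (a - 2)) +
    16 * ∫ x in Set.Ioi Real.pi, x ^ (a - 4)) ?_
  filter_upwards [eventually_gt_atTop 0] with m hm
  have hm0 : (0 : ℝ) < m := by exact_mod_cast hm
  rw [norm_one, mul_one]
  set f : ℝ → ℝ := fun y => y ^ (a - 4) * Real.sin (y / 2) ^ 6 with hf
  set g : ℝ → ℝ := fun x => x ^ (a - 4) * Real.sin (m * x / 2) ^ 6 with hg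
  set R : ℝ → ℝ := fun x => x ^ a * Real.sin (m * x / 2) ^ 6 *
    (1 / Real.sin (x / 2) ^ 4 - 16 / x ^ 4) with hR
  have hfint : IntegrableOn f (Set.Ioi 0) := integrableOn_main ha1 ha3
  have hfg : ∀ x ∈ Set.Ioi (0 : ℝ), (m : ℝ) ^ (4 - a) * f (m * x) = g x := fun x hx => by
    simp only [hf, hg]
    rw [Real.mul_rpow hm0.le (le_of_lt hx), ← mul_assoc, ← mul_assoc, ← Real.rpow_add hm0]
    simp
  have hgint : IntegrableOn g (Set.Ioi 0) := by
    have h : IntegrableOn (fun x => f (m * x)) (Set.Ioi 0) := by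
      rw [integrableOn_Ioi_comp_mul_left_iff f 0 hm0, mul_zero]
      exact hfint
    exact IntegrableOn.congr_fun (h.const_mul _) hfg measurableSet_Ioi
  have hscale : (m : ℝ) ^ (3 - a) * ∫ y in Set.Ioi 0, f y = ∫ x in Set.Ioi 0, g x := by
    rw [← setIntegral_congr_fun measurableSet_Ioi hfg, integral_const_mul,
      integral_comp_mul_left_Ioi f 0 hm0, mul_zero, smul_eq_mul, ← mul_assoc,
      show (4 : ℝ) - a = (3 - a) + 1 by ring, Real.rpow_add_one hm0.ne',
      mul_inv_cancel_right₀ hm0.ne']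
  have hRbound : ∀ᵐ x ∂(volume.restrict (Set.Ioc 0 Real.pi)), ‖R x‖ ≤ 256 * x ^ (a - 2) := by
    filter_upwards [ae_restrict_mem measurableSet_Ioc] with x hx
    have hx0 := hx.1
    have hp := Real.rpow_nonneg hx0.le a
    rw [hR, norm_mul, Real.norm_of_nonneg (mul_nonneg hp (sin_pow_six_nonneg _)), Real.norm_eq_abs]
    calc x ^ a * Real.sin (m * x / 2) ^ 6 * |1 / Real.sin (x / 2) ^ 4 - 16 / x ^ 4|
        ≤ x ^ a * 1 * (256 / x ^ 2) := by
          gcongr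
          · exact sin_pow_six_le_one _
          · exact abs_kernel_sub_le hx
      _ = 256 * x ^ (a - 2) := by
          rw [← rpow_sub_two_mul_sq hx0]; field_simp
  have hdom : IntegrableOn (fun x : ℝ => 256 * x ^ (a - 2)) (Set.Ioc 0 Real.pi) := by
    refine Integrable.const_mul ?_ _
    exact (intervalIntegrable_iff_integrableOn_Ioc_of_le Real.pi_pos.le).1
      (intervalIntegral.intervalIntegrable_rpow' (by linarith))
  have hRint : IntegrableOn R (Set.Ioc 0 Real.pi) :=
    Integrable.mono' hdom (by rw [hR]; exact Measurable.aestronglyMeasurable (by fun_prop)) hRbound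
  have hsplit := Set.Ioc_union_Ioi_eq_Ioi Real.pi_pos.le
  rw [← hsplit] at hgint
  have hJ : J6 a m = (∫ x in Set.Ioc 0 Real.pi, R x) + 16 * ∫ x in Set.Ioc 0 Real.pi, g x := by
    rw [J6, intervalIntegral.integral_of_le Real.pi_pos.le, ← integral_const_mul,
      ← integral_add hRint (hgint.left_of_union.const_mul 16)]
    refine setIntegral_congr_fun measurableSet_Ioc fun x hx => ?_
    have hx0 := hx.1
    simp only [hR, hg]
    rw [← rpow_sub_four_mul_pow_four hx0]
    field_simp
    ring
  have hdecomp : J6 a m - C61' a * (m : ℝ) ^ (3 - a) =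
      (∫ x in Set.Ioc 0 Real.pi, R x) - 16 * ∫ x in Set.Ioi Real.pi, g x := by
    rw [hJ, C61'_eq ha1 ha3, mul_assoc, mul_comm (∫ y in Set.Ioi (0 : ℝ), _), hscale, ← hsplit,
      setIntegral_union (Set.Ioc_disjoint_Ioi le_rfl) measurableSet_Ioi
        hgint.left_of_union hgint.right_of_union]
    ring
  have htail : ‖∫ x in Set.Ioi Real.pi, g x‖ ≤ ∫ x in Set.Ioi Real.pi, x ^ (a - 4) := by
    refine norm_integral_le_of_norm_le (integrableOn_Ioi_rpow ha3 Real.pi_pos) ?_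
    filter_upwards [ae_restrict_mem measurableSet_Ioi] with x hx
    have hp := Real.rpow_nonneg (Real.pi_pos.le.trans (le_of_lt hx)) (a - 4)
    rw [hg, Real.norm_of_nonneg (mul_nonneg hp (sin_pow_six_nonneg _))]
    exact mul_le_of_le_one_right hp (sin_pow_six_le_one _)
  rw [hdecomp]
  refine (norm_sub_le _ _).trans (add_le_add (norm_integral_le_of_norm_le hdom hRbound) ?_)
  rw [norm_mul, Real.norm_of_nonneg (by norm_num : (0 : ℝ) ≤ 16)]
  exact mul_le_mul_of_nonneg_left htail (by norm_num)
end
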